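/- arXiv:1906.09778 — 2 statements merged into one kernel-verified Lean document; each statement's English description precedes it below -/
import Mathlib

section
/- Let Ω ⊂ ℝⁿ be a bounded open set of diameter d, let M_a be a weighted partial trace operator of class 𝒜, and let f be continuous and bounded on Ω. Then there is a constant C_n > 0 depending only on n such that every viscosity solution u ∈ C(Ω̄) of M_a(D²u) = f in Ω satisfies sup_Ω |u| ≤ sup_{∂Ω} |u| + (C_n / a*) · d · ‖f‖_{L^n(Ω)}. -/
open Set Metric MeasureTheory Filter

noncomputable section

/-- Euclidean `n`-space `ℝⁿ`. -/
abbrev En (n : ℕ) : Type := EuclideanSpace ℝ (Fin n)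

/-- The eigenvalues of a (symmetric) matrix, arranged in nondecreasing order. -/
noncomputable def sortedEig {n : ℕ} (X : Matrix (Fin n) (Fin n) ℝ) : Fin n → ℝ :=
  if hX : X.IsHermitian then fun i => hX.eigenvalues (Tuple.sort hX.eigenvalues i) else 0

/-- The weighted partial trace operator `M_a(X) = Σ a_i λ_i(X)`. -/
noncomputable def Ma {n : ℕ} (a : Fin n → ℝ) (X : Matrix (Fin n) (Fin n) ℝ) : ℝ :=
  ∑ i, a i * sortedEig X i

/-- The last index of `Fin n`. -/
def lastIdx (n : ℕ) [NeZero n] : Fin n :=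
  ⟨n - 1, Nat.sub_lt (Nat.pos_of_ne_zero (NeZero.ne n)) Nat.one_pos⟩

/-- The class 𝒜̄ : all weights nonnegative, some weight positive. -/
def ClassAbar {n : ℕ} (a : Fin n → ℝ) : Prop := (∀ i, 0 ≤ a i) ∧ ∃ i, 0 < a i

/-- The class 𝒜 : nonnegative weights with `a 1 > 0` and `a n > 0`. -/
def ClassA {n : ℕ} [NeZero n] (a : Fin n → ℝ) : Prop :=
  (∀ i, 0 ≤ a i) ∧ 0 < a 0 ∧ 0 < a (lastIdx n)

/-- The class 𝒜₁ : nonnegative weights with `a 1 > 0`. -/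
def ClassA1 {n : ℕ} [NeZero n] (a : Fin n → ℝ) : Prop := (∀ i, 0 ≤ a i) ∧ 0 < a 0

/-- The class 𝒜ₙ : nonnegative weights with `a n > 0`. -/
def ClassAn {n : ℕ} [NeZero n] (a : Fin n → ℝ) : Prop :=
  (∀ i, 0 ≤ a i) ∧ 0 < a (lastIdx n)

/-- `a* = min (a 1) (a n)`. -/
noncomputable def aStar {n : ℕ} [NeZero n] (a : Fin n → ℝ) : ℝ := min (a 0) (a (lastIdx n))

/-- `â_j = (a 1 + ⋯ + a n) - a j`. -/
noncomputable def hatA {n : ℕ} (a : Fin n → ℝ) (j : Fin n) : ℝ := (∑ i, a i) - a j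

/-- The Hessian matrix of `φ` at `x`. -/
noncomputable def hess {n : ℕ} (φ : En n → ℝ) (x : En n) : Matrix (Fin n) (Fin n) ℝ :=
  fun i j => iteratedFDeriv ℝ 2 φ x ![EuclideanSpace.single i 1, EuclideanSpace.single j 1]

/-- The Hessian matrix of `φ` at `x`, with derivatives taken within `Ω`. -/
noncomputable def hessOn {n : ℕ} (Ω : Set (En n)) (φ : En n → ℝ) (x : En n) :
    Matrix (Fin n) (Fin n) ℝ :=
  fun i j =>
    iteratedFDerivWithin ℝ 2 φ Ω x ![EuclideanSpace.single i 1, EuclideanSpace.single j 1]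

/-- `u` is a viscosity subsolution of `M_a(D²u) = f` in `Ω`. -/
def IsViscSubsol {n : ℕ} (a : Fin n → ℝ) (Ω : Set (En n)) (f u : En n → ℝ) : Prop :=
  ∀ x₀ ∈ Ω, ∀ φ : En n → ℝ, ContDiff ℝ 2 φ →
    IsLocalMaxOn (fun x => u x - φ x) Ω x₀ → f x₀ ≤ Ma a (hess φ x₀)

/-- `u` is a viscosity supersolution of `M_a(D²u) = f` in `Ω`. -/
def IsViscSupersol {n : ℕ} (a : Fin n → ℝ) (Ω : Set (En n)) (f u : En n → ℝ) : Prop :=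
  ∀ x₀ ∈ Ω, ∀ φ : En n → ℝ, ContDiff ℝ 2 φ →
    IsLocalMinOn (fun x => u x - φ x) Ω x₀ → Ma a (hess φ x₀) ≤ f x₀

/-- `u` is a (continuous) viscosity solution of `M_a(D²u) = f` in `Ω`. -/
def IsViscSolution {n : ℕ} (a : Fin n → ℝ) (Ω : Set (En n)) (f u : En n → ℝ) : Prop :=
  ContinuousOn u Ω ∧ IsViscSubsol a Ω f u ∧ IsViscSupersol a Ω f u

/-- The `L^p` norm of `f` on `D`. -/
noncomputable def lpNormOn {n : ℕ} (p : ℝ) (D : Set (En n)) (f : En n → ℝ) : ℝ :=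
  (∫ x in D, |f x| ^ p) ^ (1 / p)

/-- The sup norm of `f` on `D`. -/
noncomputable def supAbsOn {n : ℕ} (D : Set (En n)) (f : En n → ℝ) : ℝ :=
  sSup ((fun x => |f x|) '' D)

/-- The Hölder seminorm `[h]_{β,D}`. -/
noncomputable def holderSemi {n : ℕ} (β : ℝ) (D : Set (En n)) (h : En n → ℝ) : ℝ :=
  sSup {r | ∃ x ∈ D, ∃ y ∈ D, x ≠ y ∧ r = |h x - h y| / ‖x - y‖ ^ β}

/-- The Hölder norm `‖g‖_{C^β(D)} = sup_D |g| + [g]_{β,D}`. -/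
noncomputable def cBetaNorm {n : ℕ} (β : ℝ) (D : Set (En n)) (g : En n → ℝ) : ℝ :=
  supAbsOn D g + holderSemi β D g

/-- `g` is `β`-Hölder continuous on `D`. -/
def HolderOn {n : ℕ} (β : ℝ) (D : Set (En n)) (g : En n → ℝ) : Prop :=
  ∃ K : ℝ, ∀ x ∈ D, ∀ y ∈ D, |g x - g y| ≤ K * ‖x - y‖ ^ β

/-- The `C^{1,β}(D)` norm: `sup|g| + sup|Dg| + [Dg]_{β,D}`. -/
noncomputable def c1BetaNorm {n : ℕ} (β : ℝ) (D : Set (En n)) (g : En n → ℝ) : ℝ :=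
  supAbsOn D g + sSup ((fun x => ‖fderiv ℝ g x‖) '' D) +
    sSup {r | ∃ x ∈ D, ∃ y ∈ D, x ≠ y ∧ r = ‖fderiv ℝ g x - fderiv ℝ g y‖ / ‖x - y‖ ^ β}

/-- `g ∈ C^{1,β}(D)`: differentiable with `β`-Hölder derivative on `D`. -/
def C1HolderOn {n : ℕ} (β : ℝ) (D : Set (En n)) (g : En n → ℝ) : Prop :=
  ContDiff ℝ 1 g ∧ ∃ K : ℝ, ∀ x ∈ D, ∀ y ∈ D,
    ‖fderiv ℝ g x - fderiv ℝ g y‖ ≤ K * ‖x - y‖ ^ β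

/-- Uniform exterior sphere condition with radius `R`: every boundary point lies on the
boundary of a closed ball of radius `R` containing `Ω̄`. -/
def ExtSphere {n : ℕ} (Ω : Set (En n)) (R : ℝ) : Prop :=
  ∀ y ∈ frontier Ω, ∃ z : En n, dist y z = R ∧ closure Ω ⊆ closedBall z R

/-- The cone `Σ_θ = {x : xₙ ≥ |x| cos θ}`. -/
def coneSet (n : ℕ) [NeZero n] (θ : ℝ) : Set (En n) := {x | ‖x‖ * Real.cos θ ≤ x (lastIdx n)}

/-- Uniform exterior cone condition. -/
def ExtCone {n : ℕ} [NeZero n] (Ω : Set (En n)) : Prop :=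
  ∃ θ₀ ∈ Set.Ioo (0 : ℝ) Real.pi, ∃ r₀ > (0 : ℝ), ∀ y ∈ frontier Ω,
    ∃ O : En n ≃ₗᵢ[ℝ] En n,
      closure Ω ∩ ball y r₀ ⊆ (fun x => y + O x) '' coneSet n θ₀

/-- Uniform Lipschitz boundary with Lipschitz constant `L`: near each boundary point, in
suitable rotated coordinates, `Ω` is the region above the graph of an `L`-Lipschitz
function. -/
def LipschitzBoundary {n : ℕ} [NeZero n] (Ω : Set (En n)) (L : ℝ) : Prop :=
  ∃ r₀ > (0 : ℝ), ∀ y ∈ frontier Ω, ∃ O : En n ≃ₗᵢ[ℝ] En n, ∃ ψ : En n → ℝ,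
    LipschitzWith (Real.toNNReal L) ψ ∧
    ∀ x ∈ ball (0 : En n) r₀,
      (y + O x ∈ Ω ↔ ψ (x - EuclideanSpace.single (lastIdx n) (x (lastIdx n))) < x (lastIdx n))

/-- The open cube of edge `ℓ` centered at the origin. -/
def cube (n : ℕ) (ℓ : ℝ) : Set (En n) := {x | ∀ i, |x i| < ℓ / 2}

/-- The upper concave envelope of `u` in `Ω`: the smallest concave function `≥ u` in `Ω`. -/
noncomputable def upperEnvelope {n : ℕ} (Ω : Set (En n)) (u : En n → ℝ) : En n → ℝ :=
  fun x => sInf {t | ∃ φ : En n → ℝ, ConcaveOn ℝ Ω φ ∧ (∀ z ∈ Ω, u z ≤ φ z) ∧ t = φ x}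

/-- The lower convex envelope of `u` in `Ω`: the largest convex function `≤ u` in `Ω`. -/
noncomputable def lowerEnvelope {n : ℕ} (Ω : Set (En n)) (u : En n → ℝ) : En n → ℝ :=
  fun x => sSup {t | ∃ φ : En n → ℝ, ConvexOn ℝ Ω φ ∧ (∀ z ∈ Ω, φ z ≤ u z) ∧ t = φ x}

end

/-- The paraboloid used as a test function. -/
noncomputable def paraTest {n : ℕ} (b c L : ℝ) (e p y : En n) : En n → ℝ :=
  fun z => b * (inner ℝ e (z - y) + L) ^ 2 - c * ‖z - y‖ ^ 2 + inner ℝ p z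

lemma contDiff_paraTest {n : ℕ} (b c L : ℝ) (e p y : En n) :
    ContDiff ℝ 2 (paraTest b c L e p y) := by
  unfold paraTest
  have h1 : ContDiff ℝ 2 (fun z : En n => ‖z - y‖ ^ 2) :=
    (contDiff_id.sub contDiff_const).norm_sq ℝ
  have h2 : ContDiff ℝ 2 (fun z : En n => (inner ℝ e (z - y) : ℝ)) :=
    contDiff_const.inner ℝ (contDiff_id.sub contDiff_const)
  have h3 : ContDiff ℝ 2 (fun z : En n => (inner ℝ p z : ℝ)) :=
    contDiff_const.inner ℝ contDiff_id
  exact ((contDiff_const.mul ((h2.add contDiff_const).pow 2)).sub (contDiff_const.mul h1)).add h3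

lemma fderiv_paraTest {n : ℕ} (b c L : ℝ) (e p y : En n) :
    fderiv ℝ (paraTest b c L e p y) = fun z =>
      (2 * b * (inner ℝ e (z - y) + L)) • innerSL ℝ e - (2 * c) • innerSL ℝ (z - y)
        + innerSL ℝ p := by
  funext z
  apply HasFDerivAt.fderiv
  have h0 : HasFDerivAt (fun z : En n => z - y) (ContinuousLinearMap.id ℝ (En n)) z :=
    (hasFDerivAt_id z).sub_const y
  have h1 : HasFDerivAt (fun z : En n => ‖z - y‖ ^ 2) _ z := h0.norm_sq
  have h2 : HasFDerivAt (fun z : En n => innerSL ℝ e (z - y)) _ z :=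
    (innerSL ℝ e).hasFDerivAt.comp z h0
  have h3 : HasFDerivAt (fun z : En n => innerSL ℝ p z) _ z := (innerSL ℝ p).hasFDerivAt
  have := (((h2.add_const L).pow 2).const_mul b |>.sub (h1.const_mul c)).add h3
  unfold paraTest
  simp only [innerSL_apply_apply] at this
  refine this.congr_fderiv ?_
  ext v
  simp
  ring

lemma hess_paraTest {n : ℕ} (b c L : ℝ) (e p y x : En n) (i j : Fin n) :
    hess (paraTest b c L e p y) x i j = 2 * b * (e i * e j) - 2 * c * (if i = j then 1 else 0) := by
  unfold hess
  rw [iteratedFDeriv_two_apply, fderiv_paraTest]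
  have h0 : HasFDerivAt (fun z : En n => z - y) (ContinuousLinearMap.id ℝ (En n)) x :=
    (hasFDerivAt_id x).sub_const y
  have h2 : HasFDerivAt (fun z : En n => innerSL ℝ e (z - y)) _ x :=
    (innerSL ℝ e).hasFDerivAt.comp x h0
  have h4 : HasFDerivAt (fun z : En n => innerSL ℝ (z - y)) _ x :=
    (innerSL ℝ (E := En n)).hasFDerivAt.comp x h0
  have := ((((h2.add_const L).const_mul (2 * b)).smul_const (innerSL ℝ e)).sub
    (h4.const_smul (2 * c))).add_const (innerSL ℝ p)
  simp only [innerSL_apply_apply] at this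
  have h5 : HasFDerivAt (fun z : En n => (2 * b * (inner ℝ e (z - y) + L)) • innerSL ℝ e
      - (2 * c) • innerSL ℝ (z - y) + innerSL ℝ p) _ x := this
  rw [h5.fderiv]
  have h6 : (innerSL ℝ (EuclideanSpace.single i (1 : ℝ)) : En n →L[ℝ] ℝ)
      (EuclideanSpace.single j (1 : ℝ)) = if i = j then 1 else 0 := by
    rw [innerSL_apply_apply, EuclideanSpace.inner_single_left]
    simp [Pi.single_apply]
  simp [EuclideanSpace.inner_single_right]
  erw [h6]
  split_ifs <;> ring

section eig
variable {n : ℕ} [NeZero n]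

lemma sortedEig_mono {X : Matrix (Fin n) (Fin n) ℝ} (hX : X.IsHermitian) :
    Monotone (sortedEig X) := by
  unfold sortedEig
  rw [dif_pos hX]
  exact Tuple.monotone_sort hX.eigenvalues

lemma le_sortedEig_last {X : Matrix (Fin n) (Fin n) ℝ} (hX : X.IsHermitian) {t : ℝ}
    (i : Fin n) (h : sortedEig X i = t) : t ≤ sortedEig X (lastIdx n) := by
  rw [← h]
  apply sortedEig_mono hX
  rw [Fin.le_def]
  simp only [lastIdx]
  omega

lemma sortedEig_zero_le {X : Matrix (Fin n) (Fin n) ℝ} (hX : X.IsHermitian) {t : ℝ}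
    (i : Fin n) (h : sortedEig X i = t) : sortedEig X 0 ≤ t := by
  rw [← h]
  exact sortedEig_mono hX (Fin.zero_le _)

lemma herm_para {X : Matrix (Fin n) (Fin n) ℝ} {β γ : ℝ} {e : En n}
    (hX : ∀ i j, X i j = β * (e i * e j) - γ * (if i = j then 1 else 0)) : X.IsHermitian := by
  ext i j
  simp only [Matrix.conjTranspose_apply, hX, star_trivial]
  rw [mul_comm (e i)]
  simp [eq_comm]

lemma mulVec_para {X : Matrix (Fin n) (Fin n) ℝ} {β γ : ℝ} {e : En n}
    (hX : ∀ i j, X i j = β * (e i * e j) - γ * (if i = j then 1 else 0)) (v : En n) (i : Fin n) :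
    (X.mulVec v.ofLp) i = β * inner ℝ e v * e i - γ * v i := by
  simp only [Matrix.mulVec, dotProduct, hX, sub_mul, Finset.sum_sub_distrib, PiLp.inner_apply]
  simp [Finset.mul_sum, Finset.sum_mul]
  apply Finset.sum_congr rfl
  intros
  ring

/-- Every sorted eigenvalue has the form `β t - γ` with `t ∈ [0,1]`. -/
lemma sortedEig_form {X : Matrix (Fin n) (Fin n) ℝ} {β γ : ℝ} {e : En n} (he : ‖e‖ = 1)
    (hX : ∀ i j, X i j = β * (e i * e j) - γ * (if i = j then 1 else 0)) (i : Fin n) :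
    ∃ t, 0 ≤ t ∧ sortedEig X i = β * t - γ := by
  have hH := herm_para hX
  unfold sortedEig
  rw [dif_pos hH]
  set j := Tuple.sort hH.eigenvalues i
  set v := hH.eigenvectorBasis j
  have hv : ‖v‖ = 1 := hH.eigenvectorBasis.orthonormal.1 j
  refine ⟨(inner ℝ e v) ^ 2, sq_nonneg _, ?_⟩
  have h1 := hH.mulVec_eigenvectorBasis j
  have h2 : ∀ k, β * inner ℝ e v * e k - γ * v k = hH.eigenvalues j * v k := by
    intro k
    rw [← mulVec_para hX v k, h1]
    simp [v]
  have h3 : ∑ k, (β * inner ℝ e v * e k - γ * v k) * v k = ∑ k, hH.eigenvalues j * v k * v k :=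
    Finset.sum_congr rfl fun k _ => by rw [h2 k]
  have h4 : ∑ k, v k * v k = 1 := by
    have := EuclideanSpace.real_norm_sq_eq v
    rw [hv] at this
    simpa [sq] using this.symm
  have h5 : ∑ k, e k * v k = inner ℝ e v := by
    simp [PiLp.inner_apply, mul_comm]
  have h6 : ∑ k, (β * inner ℝ e v * e k - γ * v k) * v k
      = β * inner ℝ e v * ∑ k, e k * v k - γ * ∑ k, v k * v k := by
    rw [Finset.mul_sum, Finset.mul_sum, ← Finset.sum_sub_distrib]
    exact Finset.sum_congr rfl fun k _ => by ring
  have h7 : ∑ k, hH.eigenvalues j * v k * v k = hH.eigenvalues j * ∑ k, v k * v k := by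
    rw [Finset.mul_sum]
    exact Finset.sum_congr rfl fun k _ => by ring
  rw [h6, h7, h4, h5] at h3
  linarith

lemma sortedEig_top {X : Matrix (Fin n) (Fin n) ℝ} {β γ : ℝ} {e : En n} (he : ‖e‖ = 1)
    (hX : ∀ i j, X i j = β * (e i * e j) - γ * (if i = j then 1 else 0)) :
    ∃ i, sortedEig X i = β - γ := by
  have hH := herm_para hX
  have hmem : (β - γ) ∈ spectrum ℝ X := by
    rw [← Matrix.spectrum_toLin', ← Module.End.hasEigenvalue_iff_mem_spectrum]
    apply Module.End.hasEigenvalue_of_hasEigenvector (x := e.ofLp)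
    rw [Module.End.hasEigenvector_iff, Module.End.mem_eigenspace_iff]
    constructor
    · ext i
      rw [Matrix.toLin'_apply, mulVec_para hX]
      rw [real_inner_self_eq_norm_sq, he]
      simp
      ring
    · intro h0
      have : e = 0 := by
        ext i
        simpa using congrFun h0 i
      rw [this] at he
      simp at he
  rw [hH.spectrum_real_eq_range_eigenvalues] at hmem
  obtain ⟨j, hj⟩ := hmem
  refine ⟨(Tuple.sort hH.eigenvalues).symm j, ?_⟩
  unfold sortedEig
  rw [dif_pos hH]
  simpa using hj

lemma Ma_lower {a : Fin n → ℝ} (ha : ∀ i, 0 ≤ a i) {X : Matrix (Fin n) (Fin n) ℝ}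
    {β γ : ℝ} (hβ : 0 ≤ β) {e : En n} (he : ‖e‖ = 1)
    (hX : ∀ i j, X i j = β * (e i * e j) - γ * (if i = j then 1 else 0)) :
    a (lastIdx n) * β - (∑ i, a i) * γ ≤ Ma a X := by
  obtain ⟨i, hi⟩ := sortedEig_top he hX
  have h1 := le_sortedEig_last (herm_para hX) i hi
  have h2 : ∀ i, 0 ≤ sortedEig X i + γ := by
    intro i
    obtain ⟨t, ht, h⟩ := sortedEig_form he hX i
    rw [h]
    nlinarith
  have h3 : a (lastIdx n) * (sortedEig X (lastIdx n) + γ) ≤ ∑ i, a i * (sortedEig X i + γ) :=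
    Finset.single_le_sum (f := fun i => a i * (sortedEig X i + γ))
      (fun i _ => mul_nonneg (ha i) (h2 i)) (Finset.mem_univ _)
  have h4 : ∑ i, a i * (sortedEig X i + γ) = Ma a X + (∑ i, a i) * γ := by
    unfold Ma
    rw [Finset.sum_mul, ← Finset.sum_add_distrib]
    exact Finset.sum_congr rfl fun k _ => by ring
  have h5 := mul_le_mul_of_nonneg_left h1 (ha (lastIdx n))
  nlinarith

lemma Ma_upper {a : Fin n → ℝ} (ha : ∀ i, 0 ≤ a i) {X : Matrix (Fin n) (Fin n) ℝ}
    {β γ : ℝ} (hβ : β ≤ 0) {e : En n} (he : ‖e‖ = 1)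
    (hX : ∀ i j, X i j = β * (e i * e j) - γ * (if i = j then 1 else 0)) :
    Ma a X ≤ a 0 * β - (∑ i, a i) * γ := by
  obtain ⟨i, hi⟩ := sortedEig_top he hX
  have h1 := sortedEig_zero_le (herm_para hX) i hi
  have h2 : ∀ i, 0 ≤ -(sortedEig X i + γ) := by
    intro i
    obtain ⟨t, ht, h⟩ := sortedEig_form he hX i
    rw [h]
    nlinarith
  have h3 : a 0 * -(sortedEig X 0 + γ) ≤ ∑ i, a i * -(sortedEig X i + γ) :=
    Finset.single_le_sum (f := fun i => a i * -(sortedEig X i + γ))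
      (fun i _ => mul_nonneg (ha i) (h2 i)) (Finset.mem_univ _)
  have h4 : ∑ i, a i * -(sortedEig X i + γ) = -(Ma a X + (∑ i, a i) * γ) := by
    unfold Ma
    rw [Finset.sum_mul, ← Finset.sum_add_distrib, ← Finset.sum_neg_distrib]
    exact Finset.sum_congr rfl fun k _ => by ring
  have h5 := mul_le_mul_of_nonneg_left h1 (ha 0)
  nlinarith

end eig

/-- The viscosity information that is really used: tests with paraboloids from below. -/
def TestProp {n : ℕ} (α σ : ℝ) (Ω : Set (En n)) (F v : En n → ℝ) : Prop :=
  ∀ x₀ ∈ Ω, ∀ b c L : ℝ, 0 ≤ b → 0 ≤ c → ∀ e p y : En n, ‖e‖ = 1 →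
    IsLocalMinOn (fun z => v z - paraTest b c L e p y z) Ω x₀ →
    α * (2 * b) - σ * (2 * c) ≤ F x₀

lemma testProp_super {n : ℕ} [NeZero n] {a : Fin n → ℝ} (ha : ClassA a) {Ω : Set (En n)}
    {f u : En n → ℝ} (h : IsViscSupersol a Ω f u) :
    TestProp (aStar a) (∑ i, a i) Ω (fun x => |f x|) u := by
  intro x₀ hx₀ b c L hb hc e p y he hmin
  have h1 := h x₀ hx₀ _ (contDiff_paraTest b c L e p y) hmin
  have h2 := Ma_lower ha.1 (by positivity : 0 ≤ 2 * b) he (hess_paraTest b c L e p y x₀)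
  have h3 : aStar a * (2 * b) ≤ a (lastIdx n) * (2 * b) :=
    mul_le_mul_of_nonneg_right (min_le_right _ _) (by positivity)
  have := le_abs_self (f x₀)
  simp only
  linarith

lemma testProp_sub {n : ℕ} [NeZero n] {a : Fin n → ℝ} (ha : ClassA a) {Ω : Set (En n)}
    {f u : En n → ℝ} (h : IsViscSubsol a Ω f u) :
    TestProp (aStar a) (∑ i, a i) Ω (fun x => |f x|) (fun x => -u x) := by
  intro x₀ hx₀ b c L hb hc e p y he hmin
  have hmax : IsLocalMaxOn (fun z => u z - paraTest (-b) (-c) L e (-p) y z) Ω x₀ := by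
    have := hmin.neg
    have heq : (fun z => u z - paraTest (-b) (-c) L e (-p) y z)
        = fun z => -(-u z - paraTest b c L e p y z) := by
      funext z
      simp only [paraTest, inner_neg_left]
      ring
    rw [heq]
    exact this
  have h1 := h x₀ hx₀ _ (contDiff_paraTest _ _ _ _ _ _) hmax
  have h2 := Ma_upper ha.1 (by linarith : 2 * (-b) ≤ 0) he (hess_paraTest (-b) (-c) L e (-p) y x₀)
  have h3 : aStar a * (2 * b) ≤ a 0 * (2 * b) :=
    mul_le_mul_of_nonneg_right (min_le_left _ _) (by positivity)
  have := neg_abs_le (f x₀)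
  simp only
  linarith

/-- Slopes of affine functions touching `v` from below at `x`. -/
def Tset {n : ℕ} (Ω : Set (En n)) (v : En n → ℝ) (x : En n) : Set (En n) :=
  {p | ∀ z ∈ Ω, v x + inner ℝ p (z - x) ≤ v z}

lemma key_est {n : ℕ} {α σ K L B : ℝ} {Ω : Set (En n)} {F v : En n → ℝ} (hΩ : IsOpen Ω)
    (hα : 0 < α) (hK : 0 < K) (hKσ : 8 * σ ≤ α * K ^ 2) (hL : 0 < L) (hB : 0 ≤ B)
    (hT : TestProp α σ Ω F v) (hv : ContinuousOn v Ω) {x y p q : En n} (hy : y ∈ Ω)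
    (hball : closedBall x (K * L) ⊆ Ω) (hF : ∀ z ∈ closedBall x (K * L), F z ≤ B)
    (hxy : 2 * ‖y - x‖ ≤ L) (hp : p ∈ Tset Ω v x) (hq : q ∈ Tset Ω v y) :
    ‖q - p‖ ≤ 8 * L * B / α := by
  rcases eq_or_ne (q - p) 0 with h0 | h0
  · rw [h0, norm_zero]; positivity
  set S := ‖q - p‖ with hS
  have hSpos : 0 < S := norm_pos_iff.mpr h0
  set e : En n := S⁻¹ • (q - p) with hedef
  have he : ‖e‖ = 1 := by
    rw [hedef, norm_smul, norm_inv, Real.norm_of_nonneg hSpos.le, ← hS]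
    field_simp
  have hse : q - p = S • e := by
    rw [hedef, smul_smul, mul_inv_cancel₀ hSpos.ne', one_smul]
  set b := S / (8 * L) with hb
  set c := 4 * b / K ^ 2 with hc
  have hbpos : 0 < b := by positivity
  have hcpos : 0 < c := by positivity
  have hxΩ : x ∈ Ω := hball (mem_closedBall_self (by positivity))
  let D : Set (En n) := closedBall x (K * L) ∩ {z | |inner ℝ e (z - x)| ≤ L}
  have hinner : Continuous (fun z : En n => (inner ℝ e (z - x) : ℝ)) := by fun_prop
  have hD : IsCompact D :=
    (isCompact_closedBall x _).inter_right (isClosed_le hinner.abs continuous_const)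
  have hxD : x ∈ D := by
    refine ⟨mem_closedBall_self (by positivity), ?_⟩
    simp [hL.le]
  let g : En n → ℝ := fun z => v z - paraTest b c L e p x z
  have hg : ContinuousOn g D :=
    (hv.mono (fun z hz => hball hz.1)).sub (contDiff_paraTest b c L e p x).continuous.continuousOn
  obtain ⟨z₀, hz₀, hmin⟩ := hD.exists_isMinOn ⟨x, hxD⟩ hg
  have hgx : g z₀ ≤ g x := hmin hxD
  -- lower bounds for `v`
  have hz₀Ω : z₀ ∈ Ω := hball hz₀.1
  have hlow1 : v x + inner ℝ p (z₀ - x) ≤ v z₀ := hp z₀ hz₀Ω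
  have hlow2 : v y + inner ℝ q (z₀ - y) ≤ v z₀ := hq z₀ hz₀Ω
  have hlow3 : v x + inner ℝ p (y - x) ≤ v y := hp y hy
  set t := (inner ℝ e (z₀ - x) : ℝ) with ht
  have hgx' : v z₀ - v x - inner ℝ p (z₀ - x) ≤
      b * (t + L) ^ 2 - c * ‖z₀ - x‖ ^ 2 - b * L ^ 2 := by
    simp only [g, paraTest, sub_self, inner_zero_right, norm_zero] at hgx
    rw [inner_sub_right]
    nlinarith
  have htL : |t| ≤ L := hz₀.2
  have hzK : ‖z₀ - x‖ ≤ K * L := by simpa [dist_eq_norm] using hz₀.1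
  have habs := abs_le.mp htL
  have hbL : 0 < b * L ^ 2 := by positivity
  have hcz : 0 ≤ c * ‖z₀ - x‖ ^ 2 := by positivity
  have hne1 : t ≠ -L := by
    intro h
    rw [h] at hgx'
    simp at hgx'
    linarith
  have hne2 : t ≠ L := by
    intro h
    have h1 : inner ℝ q (z₀ - y) - inner ℝ p (z₀ - x) + inner ℝ p (y - x)
        = S * (t - inner ℝ e (y - x)) := by
      have : (q : En n) = p + S • e := by rw [← hse]; abel
      rw [this, ht]
      simp only [inner_sub_right, inner_add_left, inner_smul_left]
      simp
      ring
    have h2 : (inner ℝ e (y - x) : ℝ) ≤ ‖y - x‖ := by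
      have := real_inner_le_norm e (y - x)
      rwa [he, one_mul] at this
    have h3 : S * (L / 2) ≤ S * (t - inner ℝ e (y - x)) := by
      apply mul_le_mul_of_nonneg_left _ hSpos.le
      linarith
    have h4 : S * (L / 2) = 4 * b * L ^ 2 := by
      rw [hb]; field_simp; ring
    rw [h] at hgx'
    nlinarith
  have hne3 : ‖z₀ - x‖ ≠ K * L := by
    intro h
    have h1 : c * ‖z₀ - x‖ ^ 2 = 4 * b * L ^ 2 := by
      rw [h, hc]; field_simp
    have h2 : b * (t + L) ^ 2 ≤ b * (2 * L) ^ 2 := by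
      apply mul_le_mul_of_nonneg_left _ hbpos.le
      apply pow_le_pow_left₀ <;> linarith
    nlinarith
  have hnhds : D ∈ nhds z₀ := by
    have hO : IsOpen (ball x (K * L) ∩ {z : En n | |inner ℝ e (z - x)| < L}) :=
      isOpen_ball.inter (isOpen_lt hinner.abs continuous_const)
    refine mem_of_superset (hO.mem_nhds ⟨?_, ?_⟩) ?_
    · rw [mem_ball, dist_eq_norm]
      exact lt_of_le_of_ne hzK hne3
    · change |t| < L
      rw [abs_lt]
      exact ⟨lt_of_le_of_ne habs.1 (Ne.symm hne1), lt_of_le_of_ne habs.2 hne2⟩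
    · intro z hz
      exact ⟨ball_subset_closedBall hz.1, le_of_lt (show |inner ℝ e (z - x)| < L from hz.2)⟩
  have hloc : IsLocalMinOn g Ω z₀ := (hmin.isLocalMin hnhds).on Ω
  have hfin := hT z₀ hz₀Ω b c L hbpos.le hcpos.le e p x he hloc
  have hFz := hF z₀ hz₀.1
  have h8 : σ * (2 * c) ≤ α * b := by
    have : σ * (2 * c) = 8 * σ * (b / K ^ 2) := by rw [hc]; ring
    rw [this]
    calc 8 * σ * (b / K ^ 2) ≤ α * K ^ 2 * (b / K ^ 2) :=
          mul_le_mul_of_nonneg_right hKσ (by positivity)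
      _ = α * b := by field_simp
  have h9 : α * b ≤ B := by linarith
  have h10 : S = 8 * L * b := by rw [hb]; field_simp
  rw [h10, le_div_iff₀ hα]
  nlinarith

lemma local_est {n : ℕ} {α σ K r B : ℝ} {Ω : Set (En n)} {F v : En n → ℝ} (hΩ : IsOpen Ω)
    (hα : 0 < α) (hK : 0 < K) (hKσ : 8 * σ ≤ α * K ^ 2) (hr : 0 < r) (hB : 0 ≤ B)
    (hT : TestProp α σ Ω F v) (hv : ContinuousOn v Ω) {x₀ : En n}
    (hball : closedBall x₀ r ⊆ Ω) (hF : ∀ z ∈ closedBall x₀ r, F z ≤ B) :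
    ∃ δ > 0, δ ≤ r ∧ ∀ x ∈ ball x₀ δ, ∀ y ∈ ball x₀ δ, ∀ p ∈ Tset Ω v x, ∀ q ∈ Tset Ω v y,
      ‖q - p‖ ≤ 16 * B / α * ‖y - x‖ := by
  have hδ : 0 < r / (1 + 4 * K) := by positivity
  set δ := r / (1 + 4 * K) with hδdef
  have hδr : δ + K * (4 * δ) = r := by rw [hδdef]; field_simp
  have hKδ : 0 < K * δ := by positivity
  refine ⟨δ, hδ, by linarith, ?_⟩
  intro x hx y hy p hp q hq
  have hx' : dist x x₀ < δ := hx
  have hy' : dist y x₀ < δ := hy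
  have main : ∀ L, 0 < L → L ≤ 4 * δ → 2 * ‖y - x‖ ≤ L → ‖q - p‖ ≤ 8 * L * B / α := by
    intro L hL hL4 hxy
    have hsub : closedBall x (K * L) ⊆ closedBall x₀ r := by
      apply closedBall_subset_closedBall'
      have := mul_le_mul_of_nonneg_left hL4 hK.le
      linarith
    have hyΩ : y ∈ Ω := hball (by rw [mem_closedBall]; linarith)
    exact key_est hΩ hα hK hKσ hL hB hT hv hyΩ (hsub.trans hball)
      (fun z hz => hF z (hsub hz)) hxy hp hq
  rcases eq_or_ne (y - x) 0 with h0 | h0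
  · rw [h0, norm_zero, mul_zero]
    rw [h0, norm_zero, mul_zero] at main
    have hlim : Tendsto (fun L : ℝ => 8 * L * B / α) (nhdsWithin 0 (Ioi 0)) (nhds 0) := by
      have : Continuous (fun L : ℝ => 8 * L * B / α) := by fun_prop
      have h := this.tendsto 0
      simp only [mul_zero, zero_mul, zero_div] at h
      exact h.mono_left nhdsWithin_le_nhds
    refine ge_of_tendsto hlim ?_
    filter_upwards [Ioc_mem_nhdsGT (show (0 : ℝ) < 4 * δ by positivity)] with L hL
    exact main L hL.1 hL.2 hL.1.le
  · have hpos : 0 < ‖y - x‖ := norm_pos_iff.mpr h0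
    have hle : ‖y - x‖ ≤ 2 * δ := by
      rw [← dist_eq_norm]
      linarith [dist_triangle_right y x x₀]
    calc ‖q - p‖ ≤ 8 * (2 * ‖y - x‖) * B / α := main _ (by positivity) (by linarith) le_rfl
      _ = 16 * B / α * ‖y - x‖ := by ring

lemma volume_image_le {n : ℕ} {κ : NNReal} {g : En n → En n} {s : Set (En n)}
    (hg : LipschitzOnWith κ g s) : volume (g '' s) ≤ (κ : ENNReal) ^ n * volume s := by
  have hH : Measure.IsAddHaarMeasure (Measure.hausdorffMeasure n : Measure (En n)) := by
    simpa using MeasureTheory.isAddHaarMeasure_hausdorffMeasure (E := En n)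
  have h := hg.hausdorffMeasure_image_le (d := n) (Nat.cast_nonneg n)
  rw [Measure.isAddLeftInvariant_eq_smul (volume : Measure (En n))
    (Measure.hausdorffMeasure n : Measure (En n))]
  simp only [Measure.smul_apply, ENNReal.smul_def, smul_eq_mul]
  rw [ENNReal.rpow_natCast] at h
  rw [mul_left_comm]
  gcongr

/-- All slopes at points of `S`. -/
def slopes {n : ℕ} (Ω : Set (En n)) (v : En n → ℝ) (S : Set (En n)) : Set (En n) :=
  {p | ∃ x ∈ S, p ∈ Tset Ω v x}

lemma slopes_local {n : ℕ} {α κ : ℝ} {Ω S : Set (En n)} {v : En n → ℝ} (hκ : 0 ≤ κ)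
    (h : ∀ x ∈ S, ∀ y ∈ S, ∀ p ∈ Tset Ω v x, ∀ q ∈ Tset Ω v y, ‖q - p‖ ≤ κ * ‖y - x‖) :
    volume (slopes Ω v S) ≤ ENNReal.ofReal κ ^ n * volume S := by
  classical
  let g : En n → En n := fun x => if hx : (Tset Ω v x).Nonempty then hx.some else 0
  let S' := {x ∈ S | (Tset Ω v x).Nonempty}
  have hgm : ∀ x ∈ S', g x ∈ Tset Ω v x := by
    intro x hx
    simp only [g, dif_pos hx.2]
    exact hx.2.some_mem
  have hL : LipschitzOnWith κ.toNNReal g S' := by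
    apply LipschitzOnWith.of_dist_le_mul
    intro y hy x hx
    rw [dist_eq_norm, dist_eq_norm, Real.coe_toNNReal _ hκ]
    exact h x hx.1 y hy.1 _ (hgm x hx) _ (hgm y hy)
  have hsub : slopes Ω v S ⊆ g '' S' := by
    rintro p ⟨x, hxS, hp⟩
    have hx : x ∈ S' := ⟨hxS, ⟨p, hp⟩⟩
    refine ⟨x, hx, ?_⟩
    have := h x hxS x hxS p hp (g x) (hgm x hx)
    simp only [sub_self, norm_zero, mul_zero] at this
    exact sub_eq_zero.mp (norm_le_zero_iff.mp this)
  calc volume (slopes Ω v S) ≤ volume (g '' S') := measure_mono hsub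
    _ ≤ ENNReal.ofReal κ ^ n * volume S' := volume_image_le hL
    _ ≤ ENNReal.ofReal κ ^ n * volume S := by
        gcongr
        exact fun x hx => hx.1

lemma slopes_eps {n : ℕ} {α σ ε : ℝ} {Ω : Set (En n)} {F v : En n → ℝ} (hΩ : IsOpen Ω)
    (hα : 0 < α) (hσ : 0 ≤ σ) (hF0 : ∀ x, 0 ≤ F x) (hF : ContinuousOn F Ω) (hε : 0 < ε)
    (hT : TestProp α σ Ω F v) (hv : ContinuousOn v Ω) :
    volume (slopes Ω v Ω) ≤ ∫⁻ x in Ω, ENNReal.ofReal (16 / α * (F x + ε)) ^ n := by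
  obtain ⟨K, hK, hKσ⟩ : ∃ K : ℝ, 0 < K ∧ 8 * σ ≤ α * K ^ 2 := by
    refine ⟨8 * σ / α + 1, by positivity, ?_⟩
    have h1 : 0 ≤ 8 * σ / α := by positivity
    have h2 : α * (8 * σ / α) = 8 * σ := by field_simp
    nlinarith
  have hloc : ∀ x₀ ∈ Ω, ∃ δ > 0, ∀ S ⊆ ball x₀ δ ∩ Ω, MeasurableSet S →
      volume (slopes Ω v S) ≤ ∫⁻ x in S, ENNReal.ofReal (16 / α * (F x + ε)) ^ n := by
    intro x₀ hx₀
    have hcont := (hF.continuousAt (hΩ.mem_nhds hx₀))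
    have hev : ∀ᶠ z in nhds x₀, z ∈ Ω ∧ |F z - F x₀| < ε / 2 := by
      refine Filter.Eventually.and (hΩ.mem_nhds hx₀) ?_
      have := Metric.tendsto_nhds.mp hcont.tendsto (ε / 2) (by positivity)
      simpa [Real.dist_eq] using this
    obtain ⟨r, hr, hsub⟩ := Metric.nhds_basis_closedBall.eventually_iff.mp hev
    have hB : 0 ≤ F x₀ + ε / 2 := by linarith [hF0 x₀]
    obtain ⟨δ, hδ, hδr, hest⟩ := local_est hΩ hα hK hKσ hr hB hT hv
      (fun z hz => (hsub hz).1) (fun z hz => by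
        have := abs_lt.mp (hsub hz).2
        linarith)
    refine ⟨δ, hδ, ?_⟩
    intro S hS hSm
    have h1 := slopes_local (α := α) (Ω := Ω) (S := S) (v := v)
      (κ := 16 * (F x₀ + ε / 2) / α) (by positivity)
      (fun x hx y hy => hest x (hS hx).1 y (hS hy).1)
    refine h1.trans ?_
    rw [← setLIntegral_const]
    refine setLIntegral_mono' hSm ?_
    intro x hx
    gcongr
    have hx' := abs_lt.mp (hsub (closedBall_subset_closedBall hδr
      (ball_subset_closedBall (hS hx).1))).2
    rw [mul_div_right_comm]
    exact mul_le_mul_of_nonneg_left (by linarith) (by positivity)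
  choose! δ hδ hδS using hloc
  obtain ⟨t, htΩ, htc, hcov⟩ := TopologicalSpace.countable_cover_nhdsWithin
    (f := fun x => ball x (δ x)) (s := Ω)
    (fun x hx => mem_nhdsWithin_of_mem_nhds (ball_mem_nhds x (hδ x hx)))
  rcases t.eq_empty_or_nonempty with ht | ht
  · have hΩe : Ω = ∅ := by
      rw [ht] at hcov
      simpa using hcov
    have : slopes Ω v Ω = ∅ := by
      ext p
      simp [slopes, hΩe]
    simp [this]
  obtain ⟨s, hs⟩ := htc.exists_eq_range ht
  have hsΩ : ∀ k, s k ∈ Ω := fun k => htΩ (hs ▸ mem_range_self k)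
  let U : ℕ → Set (En n) := fun k => ball (s k) (δ (s k)) ∩ Ω
  have hUm : ∀ k, MeasurableSet (disjointed U k) := by
    apply MeasurableSet.disjointed
    intro k
    exact measurableSet_ball.inter hΩ.measurableSet
  have hUΩ : ⋃ k, disjointed U k = Ω := by
    rw [iUnion_disjointed]
    apply Subset.antisymm
    · exact iUnion_subset fun k => inter_subset_right
    · intro x hx
      have := hcov hx
      rw [hs] at this
      simp only [mem_iUnion, mem_range, exists_prop] at this
      obtain ⟨y, ⟨k, rfl⟩, hk⟩ := this
      exact mem_iUnion.mpr ⟨k, hk, hx⟩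
  have hP : slopes Ω v Ω ⊆ ⋃ k, slopes Ω v (disjointed U k) := by
    rintro p ⟨x, hx, hp⟩
    rw [← hUΩ] at hx
    obtain ⟨k, hk⟩ := mem_iUnion.mp hx
    exact mem_iUnion.mpr ⟨k, x, hk, hp⟩
  calc volume (slopes Ω v Ω) ≤ volume (⋃ k, slopes Ω v (disjointed U k)) := measure_mono hP
    _ ≤ ∑' k, volume (slopes Ω v (disjointed U k)) := measure_iUnion_le _
    _ ≤ ∑' k, ∫⁻ x in disjointed U k, ENNReal.ofReal (16 / α * (F x + ε)) ^ n :=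
        ENNReal.tsum_le_tsum fun k => hδS (s k) (hsΩ k) _ (disjointed_subset U k) (hUm k)
    _ = ∫⁻ x in Ω, ENNReal.ofReal (16 / α * (F x + ε)) ^ n := by
        rw [← lintegral_iUnion hUm (disjoint_disjointed U), hUΩ]

lemma slopes_bound {n : ℕ} {α σ B : ℝ} {Ω : Set (En n)} {F v : En n → ℝ} (hΩ : IsOpen Ω)
    (hΩb : Bornology.IsBounded Ω)
    (hα : 0 < α) (hσ : 0 ≤ σ) (hF0 : ∀ x, 0 ≤ F x) (hF : ContinuousOn F Ω)
    (hFB : ∀ x ∈ Ω, F x ≤ B)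
    (hT : TestProp α σ Ω F v) (hv : ContinuousOn v Ω) :
    volume (slopes Ω v Ω) ≤ ENNReal.ofReal ((16 / α) ^ n * ∫ x in Ω, F x ^ n) := by
  have hvol : volume Ω < ⊤ := hΩb.measure_lt_top
  have hfin : IsFiniteMeasure (volume.restrict Ω) := ⟨by simpa using hvol⟩
  have hint : ∀ ε : ℝ, 0 ≤ ε → Integrable (fun x => (F x + ε) ^ n) (volume.restrict Ω) := by
    intro ε hε
    refine Integrable.of_bound (C := (B + ε) ^ n) ?_ ?_
    · exact ContinuousOn.aestronglyMeasurable ((hF.add continuousOn_const).pow n) hΩ.measurableSet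
    · filter_upwards [ae_restrict_mem hΩ.measurableSet] with x hx
      have h0 : 0 ≤ F x + ε := add_nonneg (hF0 x) hε
      rw [Real.norm_of_nonneg (by positivity)]
      exact pow_le_pow_left₀ h0 (by linarith [hFB x hx]) n
  have heps : ∀ ε : ℝ, 0 < ε → volume (slopes Ω v Ω) ≤
      ENNReal.ofReal ((16 / α) ^ n * ∫ x in Ω, (F x + ε) ^ n) := by
    intro ε hε
    refine (slopes_eps hΩ hα hσ hF0 hF hε hT hv).trans (le_of_eq ?_)
    rw [← integral_const_mul, ofReal_integral_eq_lintegral_ofReal ((hint ε hε.le).const_mul _)]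
    · apply lintegral_congr
      intro x
      have h0 : 0 ≤ F x + ε := add_nonneg (hF0 x) hε.le
      rw [← ENNReal.ofReal_pow (by positivity), mul_pow]
    · refine Eventually.of_forall fun x => ?_
      have h0 : 0 ≤ F x + ε := add_nonneg (hF0 x) hε.le
      simp only [Pi.zero_apply]
      positivity
  have hlim : Tendsto (fun k : ℕ => ENNReal.ofReal ((16 / α) ^ n *
      ∫ x in Ω, (F x + 1 / ((k : ℝ) + 1)) ^ n)) atTop
      (nhds (ENNReal.ofReal ((16 / α) ^ n * ∫ x in Ω, F x ^ n))) := by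
    apply ENNReal.tendsto_ofReal
    apply Tendsto.const_mul
    apply tendsto_integral_of_dominated_convergence (fun x => (F x + 1) ^ n)
    · intro k
      exact (hint _ (by positivity)).aestronglyMeasurable
    · exact hint 1 zero_le_one
    · intro k
      refine Eventually.of_forall fun x => ?_
      have h1 : (1 : ℝ) / ((k : ℝ) + 1) ≤ 1 := by
        rw [div_le_one (by positivity)]
        linarith [Nat.cast_nonneg (α := ℝ) k]
      have h0 : 0 ≤ F x + 1 / ((k : ℝ) + 1) := add_nonneg (hF0 x) (by positivity)
      rw [Real.norm_of_nonneg (by positivity)]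
      exact pow_le_pow_left₀ h0 (by linarith) n
    · refine Eventually.of_forall fun x => ?_
      have := (tendsto_one_div_add_atTop_nhds_zero_nat (𝕜 := ℝ)).const_add (F x)
      rw [add_zero] at this
      exact this.pow n
  exact ge_of_tendsto' hlim fun k => heps _ (by positivity)

/-- One-sided estimate. -/
lemma one_sided {n : ℕ} [NeZero n] {α σ B m : ℝ} {Ω : Set (En n)} {F v : En n → ℝ}
    (hΩ : IsOpen Ω) (hΩb : Bornology.IsBounded Ω)
    (hα : 0 < α) (hσ : 0 ≤ σ) (hF0 : ∀ x, 0 ≤ F x) (hF : ContinuousOn F Ω)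
    (hFB : ∀ x ∈ Ω, F x ≤ B)
    (hT : TestProp α σ Ω F v) (hv : ContinuousOn v (closure Ω))
    (hm : ∀ x ∈ frontier Ω, -m ≤ v x) {x₁ : En n} (hx₁ : x₁ ∈ Ω) :
    -v x₁ ≤ m + (16 / (volume (ball (0 : En n) 1)).toReal ^ (1 / (n : ℝ)) / α)
      * Metric.diam Ω * (∫ x in Ω, F x ^ n) ^ (1 / (n : ℝ)) := by
  have hn : n ≠ 0 := NeZero.ne n
  have hn' : (n : ℝ) ≠ 0 := Nat.cast_ne_zero.mpr hn
  have : Nonempty (Fin n) := ⟨0⟩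
  have : Nontrivial (En n) := inferInstance
  have hI : 0 ≤ ∫ x in Ω, F x ^ n := integral_nonneg fun x => pow_nonneg (hF0 x) n
  have hω : 0 < (volume (ball (0 : En n) 1)).toReal :=
    ENNReal.toReal_pos (measure_ball_pos _ _ one_pos).ne' measure_ball_lt_top.ne
  set ω := (volume (ball (0 : En n) 1)).toReal with hωdef
  by_cases hM : -v x₁ ≤ m
  · have hd : 0 ≤ Metric.diam Ω := Metric.diam_nonneg
    have : 0 ≤ (16 / ω ^ (1 / (n : ℝ)) / α)
      * Metric.diam Ω * (∫ x in Ω, F x ^ n) ^ (1 / (n : ℝ)) := by positivity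
    linarith
  push Not at hM
  set M := -v x₁ - m with hMdef
  have hMpos : 0 < M := by linarith
  have hdpos : 0 < Metric.diam Ω := by
    refine Metric.diam_pos ?_ hΩb
    have hNe : (nhds x₁ ⊓ Filter.principal {x₁}ᶜ).NeBot :=
      Module.punctured_nhds_neBot ℝ (En n) x₁
    obtain ⟨y, hy, hne⟩ := (Filter.nonempty_of_mem
      (inter_mem_inf (f := nhds x₁) (g := Filter.principal {x₁}ᶜ)
        (hΩ.mem_nhds hx₁) (mem_principal_self _)) : (Ω ∩ {x₁}ᶜ).Nonempty)
    exact ⟨y, hy, x₁, hx₁, hne⟩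
  set d := Metric.diam Ω with hd
  have hcomp : IsCompact (closure Ω) := hΩb.isCompact_closure
  have hsub : ball (0 : En n) (M / d) ⊆ slopes Ω v Ω := by
    intro p hp
    rw [mem_ball_zero_iff, lt_div_iff₀ hdpos] at hp
    have hc : ContinuousOn (fun z => v z - inner ℝ p (z - x₁)) (closure Ω) := by
      apply hv.sub
      fun_prop
    obtain ⟨z₀, hz₀, hmin⟩ := hcomp.exists_isMinOn ⟨x₁, subset_closure hx₁⟩ hc
    have hz₀Ω : z₀ ∈ Ω := by
      by_contra hnot
      have hfr : z₀ ∈ frontier Ω := by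
        rw [frontier, hΩ.interior_eq]
        exact ⟨hz₀, hnot⟩
      have h1 : v z₀ - inner ℝ p (z₀ - x₁) ≤ v x₁ - inner ℝ p (x₁ - x₁) :=
        hmin (subset_closure hx₁)
      rw [sub_self, inner_zero_right] at h1
      have h2 := hm z₀ hfr
      have h3 : (inner ℝ p (z₀ - x₁) : ℝ) ≤ ‖p‖ * d := by
        refine (real_inner_le_norm _ _).trans ?_
        gcongr
        rw [← dist_eq_norm, hd, ← Metric.diam_closure]
        exact Metric.dist_le_diam_of_mem hΩb.closure hz₀ (subset_closure hx₁)
      linarith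
    refine ⟨z₀, hz₀Ω, ?_⟩
    intro z hz
    have h1 : v z₀ - inner ℝ p (z₀ - x₁) ≤ v z - inner ℝ p (z - x₁) := hmin (subset_closure hz)
    have h2 : (inner ℝ p (z - z₀) : ℝ) = inner ℝ p (z - x₁) - inner ℝ p (z₀ - x₁) := by
      rw [← inner_sub_right]
      congr 1
      abel
    linarith
  have hb := (measure_mono hsub).trans
    (slopes_bound hΩ hΩb hα hσ hF0 hF hFB hT (hv.mono subset_closure))
  rw [Measure.addHaar_ball _ _ (by positivity)] at hb
  have hfr : Module.finrank ℝ (En n) = n := by simp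
  rw [hfr, ← ENNReal.ofReal_toReal (measure_ball_lt_top (μ := volume) (x := (0 : En n)) (r := 1)).ne,
    ← hωdef, ← ENNReal.ofReal_mul (by positivity), ENNReal.ofReal_le_ofReal_iff (by positivity)] at hb
  set I := ∫ x in Ω, F x ^ n with hIdef
  have hroot : ∀ t : ℝ, 0 ≤ t → (t ^ n) ^ (1 / (n : ℝ)) = t := by
    intro t ht
    rw [one_div]
    exact Real.pow_rpow_inv_natCast ht hn
  have h5 := Real.rpow_le_rpow (by positivity) hb (by positivity : 0 ≤ 1 / (n : ℝ))
  rw [Real.mul_rpow (by positivity) hω.le, Real.mul_rpow (by positivity) hI,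
    hroot _ (by positivity), hroot _ (by positivity)] at h5
  have hw : 0 < ω ^ (1 / (n : ℝ)) := Real.rpow_pos_of_pos hω _
  have h6 : M ≤ 16 / ω ^ (1 / (n : ℝ)) / α * d * I ^ (1 / (n : ℝ)) := by
    have h7 : M = M / d * ω ^ (1 / (n : ℝ)) * (d / ω ^ (1 / (n : ℝ))) := by field_simp
    rw [h7]
    calc _ ≤ 16 / α * I ^ (1 / (n : ℝ)) * (d / ω ^ (1 / (n : ℝ))) :=
          mul_le_mul_of_nonneg_right h5 (by positivity)
      _ = _ := by field_simp
  linarith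

/-- **ABP estimate (Theorem 1.1).** For a bounded open `Ω ⊆ ℝⁿ` of diameter `d`, an operator
`M_a` of class `𝒜` and `f` continuous and bounded on `Ω`, every viscosity solution
`u ∈ C(Ω̄)` of `M_a(D²u) = f` satisfies
`sup_Ω |u| ≤ sup_{∂Ω} |u| + (C_n / a*) d ‖f‖_{L^n(Ω)}` with `C_n` depending only on `n`. -/
theorem abp_bilateral (n : ℕ) [NeZero n] :
    ∃ C : ℝ, 0 < C ∧
      ∀ a : Fin n → ℝ, ClassA a →
      ∀ Ω : Set (En n), IsOpen Ω → Bornology.IsBounded Ω →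
      ∀ f u : En n → ℝ,
        ContinuousOn f Ω → (∃ K, ∀ x ∈ Ω, |f x| ≤ K) →
        ContinuousOn u (closure Ω) →
        IsViscSubsol a Ω f u → IsViscSupersol a Ω f u →
        ∀ x ∈ Ω,
          |u x| ≤ sSup ((fun y => |u y|) '' frontier Ω) +
            (C / aStar a) * Metric.diam Ω * lpNormOn (n : ℝ) Ω f := by
  have hω : 0 < (volume (ball (0 : En n) 1)).toReal :=
    ENNReal.toReal_pos (measure_ball_pos _ _ one_pos).ne' measure_ball_lt_top.ne
  refine ⟨16 / (volume (ball (0 : En n) 1)).toReal ^ (1 / (n : ℝ)), by positivity, ?_⟩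
  intro a ha Ω hΩ hΩb f u hf hfK hu hsub hsup x hx
  obtain ⟨K, hK⟩ := hfK
  have hα : 0 < aStar a := lt_min ha.2.1 ha.2.2
  have hσ : 0 ≤ ∑ i, a i := Finset.sum_nonneg fun i _ => ha.1 i
  have hlp : lpNormOn (n : ℝ) Ω f = (∫ x in Ω, |f x| ^ n) ^ (1 / (n : ℝ)) := by
    unfold lpNormOn
    simp only [Real.rpow_natCast]
  rw [hlp]
  have hcf : IsCompact (frontier Ω) :=
    hΩb.isCompact_closure.of_isClosed_subset isClosed_frontier frontier_subset_closure
  have hbdd : BddAbove ((fun y => |u y|) '' frontier Ω) :=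
    (hcf.image_of_continuousOn (hu.mono frontier_subset_closure).abs).bddAbove
  have hm : ∀ y ∈ frontier Ω, |u y| ≤ sSup ((fun y => |u y|) '' frontier Ω) :=
    fun y hy => le_csSup hbdd ⟨y, hy, rfl⟩
  rw [abs_le']
  constructor
  · have := one_sided hΩ hΩb hα hσ (fun x => abs_nonneg (f x)) hf.abs hK (testProp_sub ha hsub)
      hu.neg (fun y hy => neg_le_neg ((le_abs_self _).trans (hm y hy))) hx
    rwa [neg_neg] at this
  · exact one_sided hΩ hΩb hα hσ (fun x => abs_nonneg (f x)) hf.abs hK (testProp_super ha hsup)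
      hu (fun y hy => (neg_le_neg (hm y hy)).trans (neg_abs_le _)) hx
end

section
/- Comparison principle: let Ω ⊂ ℝⁿ be a bounded open set, M_a a weighted partial trace operator of class 𝒜̄, and f a bounded continuous function on Ω. Let u be upper semicontinuous on Ω̄ and a viscosity subsolution of M_a(D²u) = f in Ω, and let v be lower semicontinuous on Ω̄ and a viscosity supersolution of M_a(D²v) = f in Ω. If u ≤ v on ∂Ω, then u ≤ v in Ω. -/
open Set Metric MeasureTheory Filter

theorem sortedEig_add_smul {n : ℕ} (X : Matrix (Fin n) (Fin n) ℝ) (hX : X.IsHermitian) (t : ℝ)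
    (i : Fin n) : sortedEig (X + t • (1 : Matrix (Fin n) (Fin n) ℝ)) i = sortedEig X i + t := by
  have hY : (X + t • (1 : Matrix (Fin n) (Fin n) ℝ)).IsHermitian := by
    refine hX.add ?_
    unfold Matrix.IsHermitian
    simp
  have hpoly : (X + t • (1 : Matrix (Fin n) (Fin n) ℝ)).charpoly
      = ∏ i, (Polynomial.X - Polynomial.C (hX.eigenvalues i + t)) := by
    apply Polynomial.funext
    intro s
    have h1 : (X + t • (1 : Matrix (Fin n) (Fin n) ℝ)).charpoly.eval s
        = X.charpoly.eval (s - t) := by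
      rw [Matrix.eval_charpoly, Matrix.eval_charpoly]
      congr 1
      ext i j
      by_cases hij : i = j
      · subst hij; simp; ring
      · simp [hij]
    rw [h1, hX.charpoly_eq, Polynomial.eval_prod, Polynomial.eval_prod]
    refine Finset.prod_congr rfl fun i _ => ?_
    simp; ring
  have hroots := hY.roots_charpoly_eq_eigenvalues
  rw [hpoly, Polynomial.roots_prod _ _
    (Finset.prod_ne_zero_iff.mpr fun i _ => Polynomial.X_sub_C_ne_zero _)] at hroots
  simp only [Polynomial.roots_X_sub_C, Multiset.bind_singleton, Fin.univ_val_map,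
    Multiset.coe_eq_coe] at hroots
  have h2 : List.ofFn (RCLike.ofReal ∘ hY.eigenvalues : Fin n → ℝ) = List.ofFn hY.eigenvalues := by
    congr 1
  rw [h2] at hroots
  set g : Fin n → ℝ := fun i => hX.eigenvalues i + t with hg
  have hperm : (List.ofFn (hY.eigenvalues ∘ Tuple.sort hY.eigenvalues)).Perm
      (List.ofFn (g ∘ Tuple.sort hX.eigenvalues)) :=
    ((Equiv.Perm.ofFn_comp_perm _ _).trans hroots.symm).trans (Equiv.Perm.ofFn_comp_perm _ _).symm
  have hm1 : Monotone (hY.eigenvalues ∘ Tuple.sort hY.eigenvalues) := Tuple.monotone_sort _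
  have hm2 : Monotone (g ∘ Tuple.sort hX.eigenvalues) := by
    intro i j hij
    have := Tuple.monotone_sort hX.eigenvalues hij
    simp only [Function.comp_apply, hg] at this ⊢
    linarith
  have heq : hY.eigenvalues ∘ Tuple.sort hY.eigenvalues = g ∘ Tuple.sort hX.eigenvalues :=
    List.ofFn_injective (hperm.eq_of_pairwise' hm1.sortedLE_ofFn.pairwise
      hm2.sortedLE_ofFn.pairwise)
  have := congrFun heq i
  simp only [sortedEig, hY, hX, dif_pos]
  exact this

theorem Ma_add_smul {n : ℕ} (a : Fin n → ℝ) (X : Matrix (Fin n) (Fin n) ℝ) (hX : X.IsHermitian)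
    (t : ℝ) : Ma a (X + t • (1 : Matrix (Fin n) (Fin n) ℝ)) = Ma a X + t * ∑ i, a i := by
  unfold Ma
  rw [Finset.mul_sum, ← Finset.sum_add_distrib]
  refine Finset.sum_congr rfl fun i _ => ?_
  rw [sortedEig_add_smul X hX]
  ring

section Interp

variable {E : Type*} [NormedAddCommGroup E] [InnerProductSpace ℝ E] [FiniteDimensional ℝ E]

theorem exists_subgrad (g : E → ℝ) (hg : ConvexOn ℝ univ g) (y : E) :
    ∃ q : E →L[ℝ] ℝ, ∀ z, g y + q (z - y) ≤ g z := by
  have hc : Continuous g := hg.locallyLipschitz.continuous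
  have hopen : IsOpen {p : E × ℝ | p.1 ∈ (univ : Set E) ∧ g p.1 < p.2} := by
    have : IsOpen {p : E × ℝ | g p.1 < p.2} :=
      isOpen_lt (hc.comp continuous_fst) continuous_snd
    simpa using this
  obtain ⟨F, hF⟩ := geometric_hahn_banach_open_point hg.convex_strict_epigraph hopen
    (x := (y, g y)) (by simp)
  have hdec : ∀ (x : E) (t : ℝ), F (x, t) = F (x, 0) + t * F (0, 1) := by
    intro x t
    have : ((x, t) : E × ℝ) = (x, 0) + t • (0, 1) := by simp
    rw [this, map_add, map_smul, smul_eq_mul]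
  set b := F (0, 1) with hb
  have hbneg : b < 0 := by
    have := hF (y, g y + 1) (by simp)
    rw [hdec, hdec y (g y)] at this
    linarith
  refine ⟨(-b)⁻¹ • (F.comp (ContinuousLinearMap.inl ℝ E ℝ)), fun z => ?_⟩
  refine le_of_forall_pos_le_add fun ε hε => ?_
  have h1 := hF (z, g z + ε) (by simp [hε])
  rw [hdec, hdec y (g y)] at h1
  have h2 : F (z - y, 0) = F (z, 0) - F (y, 0) := by
    rw [← map_sub]; simp
  simp only [smul_apply, ContinuousLinearMap.comp_apply,
    ContinuousLinearMap.inl_apply, smul_eq_mul, h2]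
  have h3 : (-b)⁻¹ * (F (z, 0) - F (y, 0)) ≤ g z + ε - g y := by
    rw [inv_mul_le_iff₀ (by linarith)]
    nlinarith
  linarith

/-- A convex function with a quadratic upper bound on second differences is `C^{1,1}`. -/
theorem exists_grad (g : E → ℝ) (hg : ConvexOn ℝ univ g) (C : ℝ) (hC : 0 ≤ C)
    (h2 : ∀ y z, g (y + z) + g (y - z) ≤ 2 * g y + C * ‖z‖ ^ 2) :
    ∃ G : E → (E →L[ℝ] ℝ), (∀ x, HasFDerivAt g (G x) x) ∧
      ∃ K : NNReal, LipschitzWith K G := by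
  choose G hG using exists_subgrad g hg
  have hup : ∀ y z, g (y + z) ≤ g y + G y z + C * ‖z‖ ^ 2 := by
    intro y z
    have a1 := h2 y z
    have a2 := hG y (y - z)
    have : y - z - y = -z := by abel
    rw [this, map_neg] at a2
    linarith
  have hlo : ∀ y z, g y + G y z ≤ g (y + z) := by
    intro y z
    have a2 := hG y (y + z)
    simpa using a2
  refine ⟨G, fun x => ?_, Real.toNNReal (2 * C), ?_⟩
  · rw [hasFDerivAt_iff_isLittleO_nhds_zero]
    have hO : (fun h => g (x + h) - g x - G x h) =O[nhds 0] fun h : E => ‖h‖ ^ 2 := by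
      refine Asymptotics.IsBigO.of_bound C (Eventually.of_forall fun h => ?_)
      have := hup x h
      have := hlo x h
      rw [Real.norm_of_nonneg (by linarith), Real.norm_of_nonneg (by positivity)]
      linarith
    refine hO.trans_isLittleO ?_
    have := Asymptotics.isLittleO_norm_pow_id (E' := E) (n := 2) (by norm_num)
    simpa using this
  · refine LipschitzWith.of_dist_le_mul fun y y' => ?_
    rw [dist_eq_norm, dist_eq_norm]
    rw [Real.coe_toNNReal _ (by positivity)]
    have key : ∀ z, (G y - G y') z ≤ C * (‖y - y'‖ ^ 2 + ‖z‖ ^ 2) := by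
      intro z
      have a1 := hlo y (y' - y + z)
      have a2 := hup y' z
      have a3 := hup y (y' - y)
      have e1 : y + (y' - y + z) = y' + z := by abel
      have e2 : y + (y' - y) = y' := by abel
      rw [e1, map_add] at a1
      rw [e2, norm_sub_rev] at a3
      simp only [sub_apply]
      linarith
    refine ContinuousLinearMap.opNorm_le_bound _ (by positivity) fun z => ?_
    have key2 : ∀ z, (G y - G y') z ≤ 2 * C * ‖y - y'‖ * ‖z‖ := by
      intro z
      rcases eq_or_ne z 0 with rfl | hz
      · simp
      have hz' : 0 < ‖z‖ := norm_pos_iff.mpr hz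
      rcases eq_or_ne y y' with rfl | hy
      · simp
      have hd : 0 < ‖y - y'‖ := norm_pos_iff.mpr (sub_ne_zero.mpr hy)
      have := key ((‖y - y'‖ / ‖z‖) • z)
      rw [map_smul, norm_smul, smul_eq_mul, Real.norm_of_nonneg (by positivity),
        div_mul_cancel₀ _ hz'.ne', div_mul_eq_mul_div, div_le_iff₀ hz'] at this
      have h3 : ‖y - y'‖ * (G y - G y') z ≤ ‖y - y'‖ * (2 * C * ‖y - y'‖ * ‖z‖) := by
        linarith
      exact le_of_mul_le_mul_left h3 hd
    rw [Real.norm_eq_abs, abs_le]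
    constructor
    · have := key2 (-z)
      rw [map_neg, norm_neg] at this
      linarith
    · exact key2 z

theorem convexOn_normSq (c : ℝ) (hc : 0 ≤ c) : ConvexOn ℝ univ fun x : E => c * ‖x‖ ^ 2 := by
  have := (convexOn_univ_norm (E := E)).pow (fun x _ => norm_nonneg x) 2
  exact this.smul hc

/-- Interposition of a `C^{1,1}` function between a semiconvex and a semiconcave function. -/
theorem exists_interp (P Q : E → ℝ) (c : ℝ) (hc : 0 ≤ c)
    (hP : ConvexOn ℝ univ fun x => P x + c * ‖x‖ ^ 2)
    (hQ : ConcaveOn ℝ univ fun x => Q x - c * ‖x‖ ^ 2) (hPQ : ∀ x, P x ≤ Q x) :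
    ∃ φ : E → ℝ, (∀ x, P x ≤ φ x) ∧ (∀ x, φ x ≤ Q x) ∧
      ∃ G : E → (E →L[ℝ] ℝ), (∀ x, HasFDerivAt φ (G x) x) ∧
      ∃ K : NNReal, LipschitzWith K G := by
  set h : E → ℝ := fun x => Q x + c * ‖x‖ ^ 2 with hh
  let S : Set (E → ℝ) := {k | ConvexOn ℝ univ k ∧ ∀ x, k x ≤ h x}
  let P' : E → ℝ := fun x => P x + c * ‖x‖ ^ 2
  have hPS : P' ∈ S := ⟨hP, fun x => by simp only [hh, P']; linarith [hPQ x]⟩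
  have : Nonempty S := ⟨⟨P', hPS⟩⟩
  let g : E → ℝ := fun x => ⨆ k : S, k.1 x
  have hbdd : ∀ x, BddAbove (range fun k : S => k.1 x) := by
    intro x
    refine ⟨h x, ?_⟩
    rintro _ ⟨k, rfl⟩
    exact k.2.2 x
  have hle : ∀ k ∈ S, ∀ x, k x ≤ g x := fun k hk x => le_ciSup (hbdd x) ⟨k, hk⟩
  have hgh : ∀ x, g x ≤ h x := fun x => ciSup_le fun k => k.2.2 x
  have hgc : ConvexOn ℝ univ g := by
    refine ⟨convex_univ, fun x _ y _ s t hs ht hst => ?_⟩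
    refine ciSup_le fun k => ?_
    refine (k.2.1.2 (mem_univ x) (mem_univ y) hs ht hst).trans ?_
    have h1 := hle k.1 k.2 x
    have h2 := hle k.1 k.2 y
    simp only [smul_eq_mul]
    gcongr
  have hpar : ∀ y z : E, ‖y + z‖ ^ 2 + ‖y - z‖ ^ 2 = 2 * ‖y‖ ^ 2 + 2 * ‖z‖ ^ 2 := by
    intro y z
    have := parallelogram_law_with_norm ℝ y z
    nlinarith
  have hh2 : ∀ y z, h (y + z) + h (y - z) ≤ 2 * h y + 4 * c * ‖z‖ ^ 2 := by
    intro y z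
    have h1 := hQ.2 (mem_univ (y + z)) (mem_univ (y - z))
      (by norm_num : (0 : ℝ) ≤ 1 / 2) (by norm_num : (0 : ℝ) ≤ 1 / 2) (by norm_num)
    have e : (1 / 2 : ℝ) • (y + z) + (1 / 2 : ℝ) • (y - z) = y := by module
    rw [e] at h1
    simp only [smul_eq_mul] at h1
    simp only [hh]
    have hp := congrArg (fun t => c * t) (hpar y z)
    simp only [mul_add] at hp
    linarith
  have hg2 : ∀ y z, g (y + z) + g (y - z) ≤ 2 * g y + 4 * c * ‖z‖ ^ 2 := by
    intro y z
    let k : E → ℝ := fun x => (1 / 2 : ℝ) * (g (x + z) + g (x - z)) - 2 * c * ‖z‖ ^ 2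
    have hk : k ∈ S := by
      constructor
      · have c1 : ConvexOn ℝ univ fun x => g (x + z) := by
          simpa [Function.comp_def] using hgc.translate_left z
        have c2 : ConvexOn ℝ univ fun x => g (x - z) := by
          simpa [sub_eq_add_neg, Function.comp_def] using hgc.translate_left (-z)
        have := ((c1.add c2).smul (by norm_num : (0 : ℝ) ≤ 1 / 2)).add_const (-(2 * c * ‖z‖ ^ 2))
        simpa [k, sub_eq_add_neg, Pi.add_def] using this
      · intro x
        have := hh2 x z
        have := hgh (x + z)
        have := hgh (x - z)
        simp only [k]
        linarith
    have := hle k hk y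
    simp only [k] at this
    linarith
  obtain ⟨G, hG, K, hK⟩ := exists_grad g hgc (4 * c) (by positivity) hg2
  have hN : ∀ x : E, HasFDerivAt (fun x : E => c * ‖x‖ ^ 2) (((2 * c) • innerSL ℝ (E := E)) x) x := by
    intro x
    have := ((hasStrictFDerivAt_norm_sq x).hasFDerivAt).const_mul c
    have e : ((2 * c) • innerSL ℝ (E := E)) x = c • 2 • (innerSL ℝ) x := by
      ext v
      simp
      ring
    rw [e]
    exact this
  refine ⟨fun x => g x - c * ‖x‖ ^ 2, fun x => ?_, fun x => ?_, fun x => G x - ((2 * c) • innerSL ℝ (E := E)) x,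
    fun x => (hG x).sub (hN x), _, hK.sub ((2 * c) • innerSL ℝ (E := E)).lipschitz⟩
  · have := hle P' hPS x
    simp only [P'] at this
    linarith
  · have := hgh x
    simp only [hh] at this
    linarith

end Interp

section Contact

variable {E : Type*} [NormedAddCommGroup E] [InnerProductSpace ℝ E] [FiniteDimensional ℝ E]

theorem taylor_two (φ : E → ℝ) (G : E → (E →L[ℝ] ℝ)) (hG : ∀ x, HasFDerivAt φ (G x) x)
    (x₀ : E) (M : E →L[ℝ] E →L[ℝ] ℝ) (hM : HasFDerivAt G M x₀) (η : ℝ) (hη : 0 < η) :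
    ∀ᶠ y in nhds x₀, |φ y - φ x₀ - G x₀ (y - x₀) - (1 / 2) * M (y - x₀) (y - x₀)|
      ≤ η * ‖y - x₀‖ ^ 2 := by
  have hsymm : ∀ v w, M v w = M w v := fun v w => second_derivative_symmetric hG hM v w
  have hlo := (hasFDerivAt_iff_isLittleO.mp hM).bound hη
  obtain ⟨δ, hδ, hball⟩ := Metric.eventually_nhds_iff_ball.mp hlo
  refine Metric.eventually_nhds_iff_ball.mpr ⟨δ, hδ, fun y hy => ?_⟩
  let h : E → ℝ := fun y => φ y - G x₀ (y - x₀) - (1 / 2) * M (y - x₀) (y - x₀)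
  have hh : ∀ z, HasFDerivAt h (G z - G x₀ - M (z - x₀)) z := by
    intro z
    have i1 : HasFDerivAt (fun y : E => y - x₀) (ContinuousLinearMap.id ℝ E) z :=
      (hasFDerivAt_id z).sub_const x₀
    have i2 : HasFDerivAt (fun y : E => G x₀ (y - x₀)) (G x₀) z := by
      exact (G x₀).hasFDerivAt.comp z i1
    have i3 : HasFDerivAt (fun y : E => M (y - x₀)) M z := by
      exact M.hasFDerivAt.comp z i1
    have i4 := ((i3.clm_apply i1).const_mul (1 / 2 : ℝ))
    refine ((hG z).sub i2 |>.sub i4).congr_fderiv ?_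
    ext v
    have e := hsymm v (z - x₀)
    simp at e ⊢
    linarith
  have hb : ∀ z ∈ closedBall x₀ ‖y - x₀‖, ‖G z - G x₀ - M (z - x₀)‖ ≤ η * ‖y - x₀‖ := by
    intro z hz
    rw [mem_closedBall, dist_eq_norm] at hz
    rw [mem_ball, dist_eq_norm] at hy
    refine (hball z ?_).trans ?_
    · rw [mem_ball, dist_eq_norm]; linarith
    · gcongr
  have := (convex_closedBall x₀ ‖y - x₀‖).norm_image_sub_le_of_norm_hasFDerivWithin_le
    (fun z _ => (hh z).hasFDerivWithinAt) hb (mem_closedBall_self (norm_nonneg _))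
    (mem_closedBall.mpr (dist_eq_norm y x₀).le)
  simp only [h, sub_self, map_zero, mul_zero, sub_zero, Real.norm_eq_abs] at this
  calc _ = |φ y - (G x₀) (y - x₀) - 1 / 2 * (M (y - x₀)) (y - x₀) - φ x₀| := by congr 1; ring
    _ ≤ _ := this
    _ = _ := by ring

theorem contact_point [MeasurableSpace E] [BorelSpace E]
    (U V : E → ℝ) (c : ℝ) (hc : 0 ≤ c) (r : ℝ) (hr : 0 < r)
    (hU : ConvexOn ℝ univ fun x => U x + c * ‖x‖ ^ 2)
    (hV : ConcaveOn ℝ univ fun x => V x - c * ‖x‖ ^ 2)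
    (hmax : ∀ p : E, ‖p‖ ≤ r → ∃ x, ∀ y, U y - V y - inner ℝ p y ≤ U x - V x - inner ℝ p x) :
    ∃ p x : E, ‖p‖ ≤ r ∧ (∀ y, U y - V y - inner ℝ p y ≤ U x - V x - inner ℝ p x) ∧
      ∃ (L : E →L[ℝ] ℝ) (M : E →L[ℝ] E →L[ℝ] ℝ), (∀ v w, M v w = M w v) ∧
        ∀ η > 0, (∀ᶠ y in nhds x,
          U y ≤ U x + L (y - x) + (1 / 2) * M (y - x) (y - x) + η * ‖y - x‖ ^ 2) ∧
        (∀ᶠ y in nhds x, V x + (L (y - x) - inner ℝ p (y - x)) + (1 / 2) * M (y - x) (y - x)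
          - η * ‖y - x‖ ^ 2 ≤ V y) := by
  let B := closedBall (0 : E) r
  have hB : Nonempty B := ⟨⟨0, mem_closedBall_self hr.le⟩⟩
  have hmax' : ∀ p : B, ∃ x, ∀ y, U y - V y - inner ℝ p.1 y ≤ U x - V x - inner ℝ p.1 x :=
    fun p => hmax p.1 (mem_closedBall_zero_iff.mp p.2)
  choose X hX using hmax'
  let m : B → ℝ := fun p => U (X p) - V (X p) - inner ℝ p.1 (X p)
  let Γ : E → ℝ := fun x => ⨅ p : B, (m p + inner ℝ p.1 x)
  have hbdd : ∀ x, BddBelow (range fun p : B => m p + inner ℝ p.1 x) := by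
    intro x
    refine ⟨U x - V x, ?_⟩
    rintro _ ⟨p, rfl⟩
    have := hX p x
    simp only [m]
    linarith
  have hΓle : ∀ x (p : B), Γ x ≤ m p + inner ℝ p.1 x := fun x p => ciInf_le (hbdd x) p
  have hΓge : ∀ x, U x - V x ≤ Γ x := by
    intro x
    refine le_ciInf fun p => ?_
    have := hX p x
    simp only [m]
    linarith
  have hΓc : ConcaveOn ℝ univ Γ := by
    refine ⟨convex_univ, fun x _ y _ s t hs ht hst => ?_⟩
    refine le_ciInf fun p => ?_
    have h1 := mul_le_mul_of_nonneg_left (hΓle x p) hs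
    have h2 := mul_le_mul_of_nonneg_left (hΓle y p) ht
    simp only [smul_eq_mul, inner_add_right, inner_smul_right]
    have h3 : m p = s * m p + t * m p := by rw [← add_mul, hst, one_mul]
    linarith
  have hΓX : ∀ p : B, Γ (X p) = U (X p) - V (X p) := by
    intro p
    refine le_antisymm ?_ (hΓge _)
    have := hΓle (X p) p
    simp only [m] at this
    linarith
  -- first interposition
  obtain ⟨φ, hφ1, hφ2, G, hG, K, hK⟩ := exists_interp U (fun x => V x + Γ x) c hc hU
    (by
      have := hV.add hΓc
      refine this.congr fun x _ => ?_
      simp only [Pi.add_apply]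
      ring) (fun x => by linarith [hΓge x])
  obtain ⟨ψ, hψ1, hψ2, G', hG', K', hK'⟩ := exists_interp (fun x => U x - V x) Γ (2 * c)
    (by positivity)
    (by
      have := hU.sub hV
      refine this.congr fun x _ => ?_
      simp only [Pi.sub_apply]
      ring)
    (by
      have := hΓc.sub (convexOn_normSq (E := E) (2 * c) (by positivity))
      exact this) hΓge
  have hGp : ∀ p : B, G' (X p) = innerSL ℝ p.1 := by
    intro p
    have hle : ∀ y, ψ y - innerSL ℝ p.1 y ≤ ψ (X p) - innerSL ℝ p.1 (X p) := by
      intro y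
      have h1 := (hψ2 y).trans (hΓle y p)
      have h2 := hψ1 (X p)
      simp only [m] at h1
      simp only [innerSL_apply_apply]
      linarith
    have hd := (hG' (X p)).sub (innerSL ℝ p.1).hasFDerivAt
    have : IsLocalMax (fun y => ψ y - innerSL ℝ p.1 y) (X p) := Eventually.of_forall hle
    exact sub_eq_zero.mp (this.hasFDerivAt_eq_zero hd)
  -- Rademacher
  let μ : Measure E := Measure.hausdorffMeasure (Module.finrank ℝ E)
  have hae : ∀ᵐ x ∂μ, DifferentiableAt ℝ G x := hK.ae_differentiableAt
  let N : Set E := {x | ¬ DifferentiableAt ℝ G x}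
  have hN : μ N = 0 := hae
  let D : E → E := fun x => (InnerProductSpace.toDual ℝ E).symm (G' x)
  have hD : LipschitzWith K' D := by
    have := (InnerProductSpace.toDual ℝ E).symm.lipschitz.comp hK'
    rw [one_mul] at this
    exact this
  have hDN : μ (D '' N) = 0 := by
    have := hD.hausdorffMeasure_image_le (d := Module.finrank ℝ E) (by positivity) N
    rw [show Measure.hausdorffMeasure (Module.finrank ℝ E : ℝ) N = 0 from hN, mul_zero] at this
    exact le_antisymm this bot_le
  have hBpos : 0 < μ B := measure_closedBall_pos μ 0 hr
  obtain ⟨p, hpB, hpN⟩ : ∃ p ∈ B, p ∉ D '' N := by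
    by_contra hcon
    push Not at hcon
    have : μ B ≤ 0 := hDN ▸ measure_mono hcon
    exact absurd this (not_le.mpr hBpos)
  have hdiff : DifferentiableAt ℝ G (X ⟨p, hpB⟩) := by
    by_contra hcon
    refine hpN ⟨X ⟨p, hpB⟩, hcon, ?_⟩
    simp only [D, hGp]
    rw [LinearIsometryEquiv.symm_apply_eq]
    ext v
    simp
  set x := X ⟨p, hpB⟩ with hx
  have hφx : φ x = U x := by
    refine le_antisymm ?_ (hφ1 x)
    have := hφ2 x
    rw [hΓX] at this
    linarith
  refine ⟨p, x, mem_closedBall_zero_iff.mp hpB, hX ⟨p, hpB⟩, G x, fderiv ℝ G x, fun v w =>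
    second_derivative_symmetric hG hdiff.hasFDerivAt v w, fun η hη => ⟨?_, ?_⟩⟩
  · filter_upwards [taylor_two φ G hG x _ hdiff.hasFDerivAt η hη] with y hy
    have := (abs_le.mp hy).2
    have := hφ1 y
    linarith
  · filter_upwards [taylor_two φ G hG x _ hdiff.hasFDerivAt η hη] with y hy
    have h1 := (abs_le.mp hy).1
    have h2 := hφ2 y
    have h3 := hΓle y ⟨p, hpB⟩
    simp only [m, ← hx] at h3
    rw [inner_sub_right]
    linarith

end Contact

section Conv

variable {E : Type*} [NormedAddCommGroup E] [InnerProductSpace ℝ E] [FiniteDimensional ℝ E]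

theorem exists_supConv (K : Set E) (hK : IsCompact K) (hne : K.Nonempty) (g : E → ℝ)
    (hg : UpperSemicontinuousOn g K) (c : ℝ) :
    ∃ U : E → ℝ, (∀ x, ∃ ξ ∈ K, U x = g ξ - c * ‖x - ξ‖ ^ 2) ∧
      (∀ x, ∀ ξ ∈ K, g ξ - c * ‖x - ξ‖ ^ 2 ≤ U x) ∧
      ConvexOn ℝ univ fun x => U x + c * ‖x‖ ^ 2 := by
  have hex : ∀ x, ∃ ξ ∈ K, IsMaxOn (fun ξ => g ξ + -(c * ‖x - ξ‖ ^ 2)) K ξ := by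
    intro x
    refine UpperSemicontinuousOn.exists_isMaxOn hne hK ?_
    refine hg.add ?_
    have : Continuous fun ξ : E => -(c * ‖x - ξ‖ ^ 2) := by fun_prop
    exact this.continuousOn.upperSemicontinuousOn
  choose Ξ hΞK hΞ using hex
  have hexp : ∀ x ξ : E, ‖x - ξ‖ ^ 2 = ‖x‖ ^ 2 - 2 * inner ℝ x ξ + ‖ξ‖ ^ 2 :=
    fun x ξ => norm_sub_sq_real x ξ
  have hle : ∀ x, ∀ ξ ∈ K, g ξ - c * ‖x - ξ‖ ^ 2 ≤ g (Ξ x) - c * ‖x - Ξ x‖ ^ 2 := by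
    intro x ξ hξ
    have := hΞ x hξ
    simp only [mem_ofPred_eq] at this
    linarith
  refine ⟨fun x => g (Ξ x) - c * ‖x - Ξ x‖ ^ 2, fun x => ⟨Ξ x, hΞK x, rfl⟩, hle,
    convex_univ, fun x _ y _ s t hs ht hst => ?_⟩
  set ξ := Ξ (s • x + t • y) with hξ
  have h1 := mul_le_mul_of_nonneg_left (hle x ξ (hΞK _)) hs
  have h2 := mul_le_mul_of_nonneg_left (hle y ξ (hΞK _)) ht
  simp only [smul_eq_mul]
  rw [hexp (s • x + t • y) ξ, inner_add_left, inner_smul_left, inner_smul_left]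
  rw [hexp x ξ] at h1
  rw [hexp y ξ] at h2
  simp only [conj_trivial]
  have e1 : t = 1 - s := by linarith
  subst e1
  linarith

end Conv

theorem localize {n : ℕ} (Ω : Set (En n)) (hΩo : IsOpen Ω) (hΩb : Bornology.IsBounded Ω)
    (f u v : En n → ℝ) (hf : ContinuousOn f Ω)
    (hu : UpperSemicontinuousOn u (closure Ω))
    (hv : LowerSemicontinuousOn v (closure Ω)) (θ : ℝ)
    (hbd : ∀ x ∈ frontier Ω, u x - v x < θ) (κ : ℝ) (hκ : 0 < κ) :
    ∃ ρ > 0, ∀ ξ ∈ closure Ω, ∀ ζ ∈ closure Ω, dist ξ ζ ≤ ρ → θ ≤ u ξ - v ζ →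
      ξ ∈ Ω ∧ ζ ∈ Ω ∧ f ζ - f ξ < κ := by
  by_contra hcon
  push Not at hcon
  have hK : IsCompact (closure Ω) := hΩb.isCompact_closure
  have hpos : ∀ k : ℕ, (0 : ℝ) < 1 / ((k : ℝ) + 1) := fun k => Nat.one_div_pos_of_nat
  choose ξ hξ ζ hζ hd hθ hbad using fun k : ℕ => hcon (1 / ((k : ℝ) + 1)) (hpos k)
  obtain ⟨x, hx, s, hs, hlim⟩ := hK.tendsto_subseq hξ
  have hdist : Tendsto (fun k => dist (ξ (s k)) (ζ (s k))) atTop (nhds 0) := by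
    have h0 : Tendsto (fun k : ℕ => 1 / ((s k : ℝ) + 1)) atTop (nhds 0) :=
      (tendsto_one_div_add_atTop_nhds_zero_nat (𝕜 := ℝ)).comp hs.tendsto_atTop
    exact squeeze_zero (fun _ => dist_nonneg) (fun k => hd (s k)) h0
  have hlim2 : Tendsto (fun k => ζ (s k)) atTop (nhds x) :=
    hlim.congr_dist hdist
  have hw1 : Tendsto (fun k => ξ (s k)) atTop (nhdsWithin x (closure Ω)) :=
    tendsto_nhdsWithin_iff.mpr ⟨hlim, Eventually.of_forall fun k => hξ _⟩
  have hw2 : Tendsto (fun k => ζ (s k)) atTop (nhdsWithin x (closure Ω)) :=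
    tendsto_nhdsWithin_iff.mpr ⟨hlim2, Eventually.of_forall fun k => hζ _⟩
  have hxθ : θ ≤ u x - v x := by
    refine le_of_forall_pos_le_add fun e he => ?_
    have h1 := hw1.eventually (hu x hx (u x + e / 2) (by linarith))
    have h2 := hw2.eventually (hv x hx (v x - e / 2) (by linarith))
    obtain ⟨k, hk1, hk2⟩ := (h1.and h2).exists
    have := hθ (s k)
    linarith
  have hxΩ : x ∈ Ω := by
    by_contra hn
    have : x ∈ frontier Ω := by
      rw [hΩo.frontier_eq]
      exact ⟨hx, hn⟩
    linarith [hbd x this]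
  have hfx : ContinuousAt f x := hf.continuousAt (hΩo.mem_nhds hxΩ)
  have h1 := hlim.eventually (hΩo.mem_nhds hxΩ)
  have h2 := hlim2.eventually (hΩo.mem_nhds hxΩ)
  have h3 : Tendsto (fun k => f (ζ (s k)) - f (ξ (s k))) atTop (nhds (f x - f x)) :=
    (hfx.tendsto.comp hlim2).sub (hfx.tendsto.comp hlim)
  rw [sub_self] at h3
  have h4 := h3.eventually (gt_mem_nhds hκ)
  obtain ⟨k, hk1, hk2, hk3⟩ := (h1.and (h2.and h4)).exists
  exact absurd hk3 (not_lt.mpr (hbad (s k) hk1 hk2))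

/-- matrix of a bilinear form -/
noncomputable def bmat {n : ℕ} (B : En n →L[ℝ] En n →L[ℝ] ℝ) : Matrix (Fin n) (Fin n) ℝ :=
  fun i j => B (EuclideanSpace.single i 1) (EuclideanSpace.single j 1)

theorem bmat_isHermitian {n : ℕ} (B : En n →L[ℝ] En n →L[ℝ] ℝ) (hB : ∀ v w, B v w = B w v) :
    (bmat B).IsHermitian := by
  ext i j
  simp [bmat, hB]

/-- the inner product as a bilinear form -/
noncomputable def ib (n : ℕ) : En n →L[ℝ] En n →L[ℝ] ℝ := innerSL ℝ

theorem ib_apply {n : ℕ} (x y : En n) : ib n x y = inner ℝ x y := rfl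

theorem bmat_add {n : ℕ} (B : En n →L[ℝ] En n →L[ℝ] ℝ) (t : ℝ) :
    bmat (B + t • ib n) = bmat B + t • (1 : Matrix (Fin n) (Fin n) ℝ) := by
  ext i j
  by_cases h : i = j
  · subst h; simp [bmat, ib_apply]
  · simp [bmat, h, ib_apply, EuclideanSpace.inner_single_left]

theorem hess_quad {n : ℕ} (L : En n →L[ℝ] ℝ) (B : En n →L[ℝ] En n →L[ℝ] ℝ)
    (hB : ∀ v w, B v w = B w v) (x₀ : En n) :
    ContDiff ℝ 2 (fun x => L x + (1 / 2) * B (x - x₀) (x - x₀)) ∧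
    hess (fun x => L x + (1 / 2) * B (x - x₀) (x - x₀)) x₀ = bmat B := by
  constructor
  · fun_prop
  have hd : ∀ z, HasFDerivAt (fun x => L x + (1 / 2) * B (x - x₀) (x - x₀))
      (L + B (z - x₀)) z := by
    intro z
    have i1 : HasFDerivAt (fun y : En n => y - x₀) (ContinuousLinearMap.id ℝ (En n)) z :=
      (hasFDerivAt_id z).sub_const x₀
    have i3 : HasFDerivAt (fun y : En n => B (y - x₀)) B z := by
      exact B.hasFDerivAt.comp z i1
    have i4 := ((i3.clm_apply i1).const_mul (1 / 2 : ℝ))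
    refine (L.hasFDerivAt.add i4).congr_fderiv ?_
    ext v
    have e := hB v (z - x₀)
    simp at e ⊢
    linarith
  have hfd : fderiv ℝ (fun x => L x + (1 / 2) * B (x - x₀) (x - x₀))
      = fun z => L + B (z - x₀) := funext fun z => (hd z).fderiv
  have hd2 : HasFDerivAt (fun z => L + B (z - x₀)) B x₀ := by
    have i1 : HasFDerivAt (fun y : En n => y - x₀) (ContinuousLinearMap.id ℝ (En n)) x₀ :=
      (hasFDerivAt_id x₀).sub_const x₀
    have i3 : HasFDerivAt (fun y : En n => B (y - x₀)) B x₀ := B.hasFDerivAt.comp x₀ i1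
    exact i3.const_add L
  ext i j
  simp only [hess, bmat]
  rw [iteratedFDeriv_two_apply, hfd, hd2.fderiv]
  rfl

theorem test_sub {n : ℕ} (a : Fin n → ℝ) (Ω : Set (En n)) (f u : En n → ℝ)
    (hsub : IsViscSubsol a Ω f u) (ξ₀ : En n) (hξ : ξ₀ ∈ Ω) (L : En n →L[ℝ] ℝ)
    (B : En n →L[ℝ] En n →L[ℝ] ℝ) (hB : ∀ v w, B v w = B w v)
    (h : ∀ᶠ ξ in nhds ξ₀, ξ ∈ Ω → u ξ ≤ u ξ₀ + L (ξ - ξ₀) + (1 / 2) * B (ξ - ξ₀) (ξ - ξ₀)) :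
    f ξ₀ ≤ Ma a (bmat B) := by
  obtain ⟨h1, h2⟩ := hess_quad L B hB ξ₀
  rw [← h2]
  refine hsub ξ₀ hξ _ h1 ?_
  refine eventually_nhdsWithin_iff.mpr ?_
  filter_upwards [h] with ξ hh hξΩ
  have := hh hξΩ
  rw [map_sub] at this
  simp only [sub_self, map_zero, mul_zero, add_zero]
  linarith

theorem test_sup {n : ℕ} (a : Fin n → ℝ) (Ω : Set (En n)) (f u : En n → ℝ)
    (hsup : IsViscSupersol a Ω f u) (ξ₀ : En n) (hξ : ξ₀ ∈ Ω) (L : En n →L[ℝ] ℝ)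
    (B : En n →L[ℝ] En n →L[ℝ] ℝ) (hB : ∀ v w, B v w = B w v)
    (h : ∀ᶠ ξ in nhds ξ₀, ξ ∈ Ω → u ξ₀ + L (ξ - ξ₀) + (1 / 2) * B (ξ - ξ₀) (ξ - ξ₀) ≤ u ξ) :
    Ma a (bmat B) ≤ f ξ₀ := by
  obtain ⟨h1, h2⟩ := hess_quad L B hB ξ₀
  rw [← h2]
  refine hsup ξ₀ hξ _ h1 ?_
  refine eventually_nhdsWithin_iff.mpr ?_
  filter_upwards [h] with ξ hh hξΩ
  have := hh hξΩ
  rw [map_sub] at this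
  simp only [sub_self, map_zero, mul_zero, add_zero]
  linarith

set_option maxHeartbeats 2000000 in
/-- **Comparison principle (Theorem 3.1).** Let `Ω ⊆ ℝⁿ` be bounded open, `M_a ∈ 𝒜̄` and
`f` bounded and continuous on `Ω`. If `u` is usc on `Ω̄` and a viscosity subsolution of
`M_a(D²u) = f`, `v` is lsc on `Ω̄` and a viscosity supersolution, and `u ≤ v` on `∂Ω`,
then `u ≤ v` in `Ω`. -/
theorem comparison_principle (n : ℕ) (a : Fin n → ℝ) (ha : ClassAbar a)
    (Ω : Set (En n)) (hΩo : IsOpen Ω) (hΩb : Bornology.IsBounded Ω)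
    (f u v : En n → ℝ)
    (hf : ContinuousOn f Ω) (hfb : ∃ K, ∀ x ∈ Ω, |f x| ≤ K)
    (hu : UpperSemicontinuousOn u (closure Ω))
    (hv : LowerSemicontinuousOn v (closure Ω))
    (hsub : IsViscSubsol a Ω f u) (hsup : IsViscSupersol a Ω f v)
    (hbd : ∀ x ∈ frontier Ω, u x ≤ v x) :
    ∀ x ∈ Ω, u x ≤ v x := by
  intro x₁ hx₁
  by_contra hlt
  push Not at hlt
  set m₀ := u x₁ - v x₁ with hm₀
  have hm₀pos : 0 < m₀ := by linarith
  set S := ∑ i, a i with hS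
  have hSpos : 0 < S := by
    obtain ⟨h0, i, hi⟩ := ha
    exact Finset.sum_pos' (fun i _ => h0 i) ⟨i, Finset.mem_univ i, hi⟩
  have hK : IsCompact (closure Ω) := hΩb.isCompact_closure
  have hx₁K : x₁ ∈ closure Ω := subset_closure hx₁
  have hne : (closure Ω).Nonempty := ⟨x₁, hx₁K⟩
  obtain ⟨R, hRpos, hR⟩ : ∃ R > 0, ∀ x ∈ closure Ω, ‖x‖ ≤ R :=
    hK.isBounded.exists_pos_norm_le
  -- perturbation
  set δ := m₀ / (R ^ 2 + 1) with hδ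
  have hδpos : 0 < δ := by positivity
  have hδR : δ * R ^ 2 ≤ m₀ := by
    rw [hδ, div_mul_eq_mul_div, div_le_iff₀ (by positivity)]
    nlinarith
  set u' : En n → ℝ := fun x => u x + δ / 2 * ‖x‖ ^ 2 with hu'
  have hu'usc : UpperSemicontinuousOn u' (closure Ω) := by
    refine hu.add ?_
    have : Continuous fun ξ : En n => δ / 2 * ‖ξ‖ ^ 2 := by fun_prop
    exact this.continuousOn.upperSemicontinuousOn
  have hv'usc : UpperSemicontinuousOn (fun x => - v x) (closure Ω) := by
    intro x hx y hy
    filter_upwards [hv x hx (-y) (by linarith)] with z hz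
    linarith
  obtain ⟨ρ, hρ, hloc⟩ := localize Ω hΩo hΩb f u' v hf hu'usc hv (3 * m₀ / 4)
    (by
      intro x hx
      have h1 := hbd x hx
      have h2 := hR x (frontier_subset_closure hx)
      have h3 : ‖x‖ ^ 2 ≤ R ^ 2 := by gcongr
      have h4 : δ * ‖x‖ ^ 2 ≤ δ * R ^ 2 := by gcongr
      simp only [hu']
      linarith) (δ * S / 2) (by positivity)
  obtain ⟨z₁, hz₁, hmaxu⟩ := UpperSemicontinuousOn.exists_isMaxOn hne hK hu'usc
  obtain ⟨z₂, hz₂, hmaxv⟩ := UpperSemicontinuousOn.exists_isMaxOn hne hK hv'usc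
  set A := u' z₁ + - v z₂ with hA
  have hAle : ∀ ξ ∈ closure Ω, ∀ ζ ∈ closure Ω, u' ξ - v ζ ≤ A := by
    intro ξ hξ ζ hζ
    have h1 := hmaxu hξ
    have h2 := hmaxv hζ
    simp only [mem_ofPred_eq] at h1 h2
    linarith
  have hm₁ : m₀ ≤ u' x₁ - v x₁ := by
    have : 0 ≤ δ / 2 * ‖x₁‖ ^ 2 := by positivity
    simp only [hu']
    linarith
  have hApos : 0 < A := by linarith [hAle x₁ hx₁K x₁ hx₁K]
  set W := A + 2 * R + 1 with hW
  have hWpos : 0 < W := by positivity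
  set c := 2 + 4 * W / ρ ^ 2 with hc
  have hc2 : 2 ≤ c := by
    have : 0 ≤ 4 * W / ρ ^ 2 := by positivity
    linarith
  have hcρ : 4 * W ≤ c * ρ ^ 2 := by
    rw [hc, add_mul, div_mul_cancel₀ _ (by positivity)]
    nlinarith [sq_nonneg ρ]
  set r := min 1 (m₀ / (4 * (2 * R + ρ))) with hr
  have hrpos : 0 < r := lt_min one_pos (by positivity)
  have hr1 : r ≤ 1 := min_le_left _ _
  have hr2 : r * (2 * R + ρ) ≤ m₀ / 4 := by
    have h1 : r ≤ m₀ / (4 * (2 * R + ρ)) := min_le_right _ _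
    rw [le_div_iff₀ (by positivity)] at h1
    linarith
  obtain ⟨U, hU1, hU2, hUc⟩ := exists_supConv (closure Ω) hK hne u' hu'usc c
  obtain ⟨V', hV1, hV2, hVc⟩ := exists_supConv (closure Ω) hK hne (fun x => - v x) hv'usc c
  set V : En n → ℝ := fun x => - V' x with hV
  have hVc' : ConcaveOn ℝ univ fun x => V x - c * ‖x‖ ^ 2 := by
    refine hVc.neg.congr fun x _ => ?_
    simp only [hV, Pi.neg_apply]
    ring
  -- key localization of near maximizers
  have hkey : ∀ p : En n, ‖p‖ ≤ r → ∀ x,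
      U x₁ - V x₁ - inner ℝ p x₁ ≤ U x - V x - inner ℝ p x →
      ∀ ξ ∈ closure Ω, U x = u' ξ - c * ‖x - ξ‖ ^ 2 →
      ∀ ζ ∈ closure Ω, V' x = - v ζ - c * ‖x - ζ‖ ^ 2 →
      ‖x - ξ‖ ≤ ρ ∧ dist ξ ζ ≤ ρ ∧ 3 * m₀ / 4 ≤ u' ξ - v ζ := by
    intro p hp x hx ξ hξ hUx ζ hζ hVx
    have h1 := hU2 x₁ x₁ hx₁K
    have h2 := hV2 x₁ x₁ hx₁K
    simp only [sub_self, norm_zero] at h1 h2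
    simp only [hV] at hx
    have h3 : inner ℝ p x₁ - inner ℝ p x ≤ r * (2 * R + ‖x - ξ‖) := by
      rw [← inner_sub_right]
      refine (real_inner_le_norm _ _).trans ?_
      have : ‖x₁ - x‖ ≤ 2 * R + ‖x - ξ‖ := by
        calc ‖x₁ - x‖ = ‖x₁ - ξ - (x - ξ)‖ := by congr 1; abel
          _ ≤ ‖x₁ - ξ‖ + ‖x - ξ‖ := norm_sub_le _ _
          _ ≤ ‖x₁‖ + ‖ξ‖ + ‖x - ξ‖ := by gcongr; exact norm_sub_le _ _
          _ ≤ _ := by linarith [hR x₁ hx₁K, hR ξ hξ]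
      gcongr
    set t := ‖x - ξ‖ with ht
    set s := ‖x - ζ‖ with hs
    have ht0 : 0 ≤ t := norm_nonneg _
    have hs0 : 0 ≤ s := norm_nonneg _
    have h4 : m₀ + c * (t ^ 2 + s ^ 2) ≤ u' ξ - v ζ + r * (2 * R + t) := by
      rw [hUx, hVx] at hx
      linarith
    have h5 := hAle ξ hξ ζ hζ
    have h6 : r * (2 * R + t) ≤ 2 * R + t := by
      have : 0 ≤ 2 * R + t := by positivity
      nlinarith
    have h7 : c * (t ^ 2 + s ^ 2) ≤ 2 * W := by
      have h8 : t ≤ 1 + t ^ 2 := by nlinarith [sq_nonneg (t - 1)]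
      have h9 : 2 * (t ^ 2 + s ^ 2) ≤ c * (t ^ 2 + s ^ 2) := by gcongr
      have : 0 ≤ s ^ 2 := sq_nonneg s
      linarith
    have h8 : 2 * (t ^ 2 + s ^ 2) ≤ ρ ^ 2 := by
      have : c * (2 * (t ^ 2 + s ^ 2)) ≤ c * ρ ^ 2 := by linarith
      exact le_of_mul_le_mul_left this (by linarith)
    have h9 : (t + s) ^ 2 ≤ ρ ^ 2 := by nlinarith [sq_nonneg (t - s)]
    have h10 : t + s ≤ ρ := le_of_sq_le_sq h9 hρ.le
    refine ⟨by linarith, ?_, ?_⟩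
    · rw [dist_eq_norm]
      calc ‖ξ - ζ‖ = ‖(x - ζ) - (x - ξ)‖ := by congr 1; abel
        _ ≤ s + t := norm_sub_le _ _
        _ ≤ ρ := by linarith
    · have h11 : r * (2 * R + t) ≤ r * (2 * R + ρ) := by gcongr; linarith
      have : 0 ≤ c * (t ^ 2 + s ^ 2) := by positivity
      linarith
  have hUcont : Continuous U := by
    have h1 : Continuous fun x => U x + c * ‖x‖ ^ 2 := hUc.locallyLipschitz.continuous
    have h2 : Continuous fun x : En n => c * ‖x‖ ^ 2 := by fun_prop
    exact (h1.sub h2).congr fun x => add_sub_cancel_right _ _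
  have hVcont : Continuous V := by
    have h1 : Continuous fun x => V' x + c * ‖x‖ ^ 2 := hVc.locallyLipschitz.continuous
    have h2 : Continuous fun x : En n => c * ‖x‖ ^ 2 := by fun_prop
    have : Continuous V' := (h1.sub h2).congr fun x => add_sub_cancel_right _ _
    exact this.neg
  have hmax : ∀ p : En n, ‖p‖ ≤ r →
      ∃ x, ∀ y, U y - V y - inner ℝ p y ≤ U x - V x - inner ℝ p x := by
    intro p hp
    have hcont : Continuous fun x => U x - V x - inner ℝ p x := by fun_prop
    have hx₁B : x₁ ∈ closedBall (0 : En n) (R + ρ) := by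
      rw [mem_closedBall_zero_iff]
      linarith [hR x₁ hx₁K]
    obtain ⟨x, hxB, hx⟩ := (isCompact_closedBall (0 : En n) (R + ρ)).exists_isMaxOn ⟨x₁, hx₁B⟩
      hcont.continuousOn
    refine ⟨x, fun y => ?_⟩
    by_contra hy
    push Not at hy
    have hxx₁ : U x₁ - V x₁ - inner ℝ p x₁ ≤ U x - V x - inner ℝ p x := hx hx₁B
    obtain ⟨ξ, hξ, hUy⟩ := hU1 y
    obtain ⟨ζ, hζ, hVy⟩ := hV1 y
    obtain ⟨h1, -, -⟩ := hkey p hp y (hxx₁.trans hy.le) ξ hξ hUy ζ hζ hVy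
    have hyB : y ∈ closedBall (0 : En n) (R + ρ) := by
      rw [mem_closedBall_zero_iff]
      calc ‖y‖ = ‖ξ + (y - ξ)‖ := by congr 1; abel
        _ ≤ ‖ξ‖ + ‖y - ξ‖ := norm_add_le _ _
        _ ≤ R + ρ := by linarith [hR ξ hξ]
    have : U y - V y - inner ℝ p y ≤ U x - V x - inner ℝ p x := hx hyB
    linarith
  obtain ⟨p, x, hp, hxmax, L, M, hM, hexp⟩ :=
    contact_point U V c (by linarith) r hrpos hUc hVc' hmax
  obtain ⟨ξ, hξ, hUx⟩ := hU1 x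
  obtain ⟨ζ, hζ, hVx⟩ := hV1 x
  obtain ⟨-, hd, hge⟩ := hkey p hp x (hxmax x₁) ξ hξ hUx ζ hζ hVx
  obtain ⟨hξΩ, hζΩ, hff⟩ := hloc ξ hξ ζ hζ hd hge
  set η := δ / 16 with hη
  obtain ⟨hup, hlo⟩ := hexp η (by positivity)
  have hsymm : ∀ t : ℝ, ∀ v w, (M + t • ib n) v w = (M + t • ib n) w v := by
    intro t v w
    simp [hM v w, ib_apply, real_inner_comm]
  have hsubineq : f ξ ≤ Ma a (bmat (M + (2 * η - δ) • ib n)) := by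
    refine test_sub a Ω f u hsub ξ hξΩ (L - δ • ib n ξ) _ (hsymm _) ?_
    have ht : Tendsto (fun z : En n => x + (z - ξ)) (nhds ξ) (nhds x) := by
      have : Continuous fun z : En n => x + (z - ξ) := by fun_prop
      simpa using this.tendsto ξ
    filter_upwards [ht.eventually hup] with z hz hzΩ
    have h1 := hU2 (x + (z - ξ)) z (subset_closure hzΩ)
    have e1 : x + (z - ξ) - z = x - ξ := by abel
    have e2 : x + (z - ξ) - x = z - ξ := by abel
    rw [e1] at h1
    rw [e2, hUx] at hz
    have e3 : ‖z‖ ^ 2 = ‖ξ‖ ^ 2 + 2 * inner ℝ ξ (z - ξ) + ‖z - ξ‖ ^ 2 := by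
      rw [← norm_add_sq_real]
      congr 2
      abel
    simp only [hu'] at h1 hz
    rw [e3] at h1
    simp only [sub_apply, add_apply, smul_apply, ib_apply, smul_eq_mul,
      real_inner_self_eq_norm_sq]
    linarith
  have hsupineq : Ma a (bmat (M + (-(2 * η)) • ib n)) ≤ f ζ := by
    refine test_sup a Ω f v hsup ζ hζΩ (L - ib n p) _ (hsymm _) ?_
    have ht : Tendsto (fun z : En n => x + (z - ζ)) (nhds ζ) (nhds x) := by
      have : Continuous fun z : En n => x + (z - ζ) := by fun_prop
      simpa using this.tendsto ζ
    filter_upwards [ht.eventually hlo] with z hz hzΩ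
    have h1 := hV2 (x + (z - ζ)) z (subset_closure hzΩ)
    have e1 : x + (z - ζ) - z = x - ζ := by abel
    have e2 : x + (z - ζ) - x = z - ζ := by abel
    rw [e1] at h1
    simp only [hV] at hz
    rw [e2, hVx] at hz
    simp only [sub_apply, add_apply, smul_apply, ib_apply, smul_eq_mul,
      real_inner_self_eq_norm_sq]
    linarith
  rw [bmat_add, Ma_add_smul _ _ (bmat_isHermitian M hM)] at hsubineq hsupineq
  rw [← hS] at hsubineq hsupineq
  have : 0 < δ * S := by positivity
  rw [hη] at hsubineq hsupineq
  linarith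
end
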